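/- arXiv:2603.04347 — 10 statements merged into one kernel-verified Lean document; each statement's English description precedes it below -/
import Mathlib

section
/- Let d ≥ 2, let X be an ℝ^d-valued random vector, let u be a unit vector in ℝ^d and let α ∈ (0,1). Suppose k > 0 satisfies P(‖X‖ > k) < (1−α)/2. Then every geometric quantile q₀ = q_X(αu), i.e. every minimizer of f_{αu}, satisfies ‖q₀‖ ≤ 2·k·P(‖X‖ ≤ k) / (1 − α − 2·P(‖X‖ > k)). -/
/-!
Since `0` is a competitor with objective value `0`, a minimizer `q₀` satisfies
`E[‖X − q₀‖ − ‖X‖] ≤ α⟨u, q₀⟩ ≤ α‖q₀‖`. By the triangle inequality the integrand is at least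
`‖q₀‖ − 2k` on `{‖X‖ ≤ k}` and at least `−‖q₀‖` everywhere, so with `p = P(‖X‖ ≤ k)` the
expectation is at least `(‖q₀‖ − 2k) p − ‖q₀‖ (1 − p)`. Combining the two bounds and solving for
`‖q₀‖` gives the claim; the tail condition makes the coefficient `1 − α − 2 (1 − p)` positive.
-/

open MeasureTheory
open scoped RealInnerProductSpace ProbabilityTheory

/-- The objective function defining geometric quantiles:
`f_{αu}(q) = E[‖X−q‖ − ‖X‖] − α⟨u,q⟩`. -/
noncomputable def gqObj {d : ℕ} {Ω : Type*} [MeasureSpace Ω]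
    (X : Ω → EuclideanSpace ℝ (Fin d)) (α : ℝ)
    (u q : EuclideanSpace ℝ (Fin d)) : ℝ :=
  (∫ ω, (‖X ω - q‖ - ‖X ω‖)) - α * ⟪u, q⟫

/-- Theorem (upper bound, no moment assumption): if `P(‖X‖ > k) < (1−α)/2`, then any
geometric quantile `q₀ = q_X(αu)` satisfies
`‖q₀‖ ≤ 2 k P(‖X‖ ≤ k) / (1 − α − 2 P(‖X‖ > k))`. -/
theorem geometric_quantile_upper_bound_no_moment
    {d : ℕ} (hd : 2 ≤ d)
    {Ω : Type*} [MeasureSpace Ω] [IsProbabilityMeasure (ℙ : Measure Ω)]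
    (X : Ω → EuclideanSpace ℝ (Fin d)) (hX : Measurable X)
    (u : EuclideanSpace ℝ (Fin d)) (hu : ‖u‖ = 1)
    (α : ℝ) (hα : α ∈ Set.Ioo (0 : ℝ) 1)
    (k : ℝ) (hk : 0 < k)
    (htail : (ℙ {ω | k < ‖X ω‖}).toReal < (1 - α) / 2)
    (q₀ : EuclideanSpace ℝ (Fin d))
    (hmin : ∀ q : EuclideanSpace ℝ (Fin d), gqObj X α u q₀ ≤ gqObj X α u q) :
    ‖q₀‖ ≤ 2 * k * (ℙ {ω | ‖X ω‖ ≤ k}).toReal /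
      (1 - α - 2 * (ℙ {ω | k < ‖X ω‖}).toReal) := by
  have hA : MeasurableSet {ω | ‖X ω‖ ≤ k} := measurableSet_le hX.norm measurable_const
  have hcompl : {ω | k < ‖X ω‖} = {ω | ‖X ω‖ ≤ k}ᶜ := by
    ext ω
    simp
  have ht : (ℙ {ω | k < ‖X ω‖}).toReal = 1 - (ℙ {ω | ‖X ω‖ ≤ k}).toReal := by
    rw [hcompl]
    exact probReal_compl_eq_one_sub hA
  rw [ht] at htail ⊢
  have hint : Integrable (fun ω => ‖X ω - q₀‖ - ‖X ω‖) (ℙ : Measure Ω) := by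
    refine Integrable.of_bound (C := ‖q₀‖)
      ((hX.sub_const q₀).norm.sub hX.norm).aestronglyMeasurable (ae_of_all _ fun ω => ?_)
    simpa using abs_norm_sub_norm_le (X ω - q₀) (X ω)
  have hind : Integrable ({ω | ‖X ω‖ ≤ k}.indicator fun _ => 2 * ‖q₀‖ - 2 * k)
      (ℙ : Measure Ω) := (integrable_const _).indicator hA
  -- The minorant equals `‖q₀‖ - 2k` on `{‖X‖ ≤ k}` and `-‖q₀‖` off it.
  have hlow : ∫ ω, ({ω | ‖X ω‖ ≤ k}.indicator (fun _ => 2 * ‖q₀‖ - 2 * k) ω - ‖q₀‖) ≤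
      ∫ ω, (‖X ω - q₀‖ - ‖X ω‖) := by
    refine integral_mono (hind.sub (integrable_const _)) hint fun ω => ?_
    by_cases h : ‖X ω‖ ≤ k
    · have h1 := norm_sub_norm_le q₀ (X ω)
      rw [norm_sub_rev] at h1
      simp only [Set.indicator, Set.mem_ofPred_eq, h, if_true]
      linarith
    · have h1 := norm_sub_norm_le (X ω) (X ω - q₀)
      rw [sub_sub_cancel] at h1
      simp only [Set.indicator, Set.mem_ofPred_eq, h, if_false]
      linarith
  rw [integral_sub hind (integrable_const _), integral_indicator_const _ hA] at hlow
  simp only [integral_const, probReal_univ, smul_eq_mul, one_mul] at hlow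
  simp only [Measure.real] at hlow
  have h0 := hmin 0
  simp only [gqObj, sub_zero, sub_self, integral_zero, inner_zero_right, mul_zero] at h0
  have hin : ⟪u, q₀⟫ ≤ ‖q₀‖ := by
    simpa [hu] using real_inner_le_norm u q₀
  have hαin := mul_le_mul_of_nonneg_left hin hα.1.le
  rw [le_div_iff₀ (by linarith)]
  linarith
end

section
/- Let d ≥ 2, let X be an ℝ^d-valued random vector with E‖X‖ < ∞, let u be a unit vector in ℝ^d and let α ∈ (0,1). Then every geometric quantile q₀ = q_X(αu), i.e. every minimizer of f_{αu}, satisfies ‖q₀‖ ≤ 2·E‖X‖ / (1 − α). -/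
/-!
The objective vanishes at `0`, so a minimizer satisfies `f q₀ ≤ 0`. Conversely, the triangle
inequality `‖X - q₀‖ ≥ ‖q₀‖ - ‖X‖` and Cauchy–Schwarz `⟪u, q₀⟫ ≤ ‖q₀‖` give
`f q₀ ≥ (1 - α) ‖q₀‖ - 2 E‖X‖`; the moment hypothesis makes both integrands integrable.
-/

open MeasureTheory
open scoped RealInnerProductSpace ProbabilityTheory

/-- Theorem (upper bound under a first moment): if `E‖X‖ < ∞`, then any geometric
quantile `q₀ = q_X(αu)` satisfies `‖q₀‖ ≤ 2 E‖X‖ / (1 − α)`. -/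
theorem geometric_quantile_upper_bound_first_moment
    {d : ℕ} (hd : 2 ≤ d)
    {Ω : Type*} [MeasureSpace Ω] [IsProbabilityMeasure (ℙ : Measure Ω)]
    (X : Ω → EuclideanSpace ℝ (Fin d)) (hX : Measurable X)
    (hint : Integrable (fun ω => ‖X ω‖))
    (u : EuclideanSpace ℝ (Fin d)) (hu : ‖u‖ = 1)
    (α : ℝ) (hα : α ∈ Set.Ioo (0 : ℝ) 1)
    (q₀ : EuclideanSpace ℝ (Fin d))
    (hmin : ∀ q : EuclideanSpace ℝ (Fin d), gqObj X α u q₀ ≤ gqObj X α u q) :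
    ‖q₀‖ ≤ 2 * (∫ ω, ‖X ω‖) / (1 - α) := by
  have hα1 : 0 < 1 - α := sub_pos.mpr hα.2
  have h0 := hmin 0
  have hz : gqObj X α u 0 = 0 := by simp [gqObj]
  rw [hz, gqObj] at h0
  have hin : ⟪u, q₀⟫ ≤ ‖q₀‖ := by simpa [hu] using real_inner_le_norm u q₀
  have hI : Integrable (fun ω => ‖X ω - q₀‖ - ‖X ω‖) :=
    ((((integrable_norm_iff hX.aestronglyMeasurable).mp hint).sub
      (integrable_const q₀)).norm).sub hint
  have hlow : ‖q₀‖ - 2 * ∫ ω, ‖X ω‖ ≤ ∫ ω, (‖X ω - q₀‖ - ‖X ω‖) := by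
    have h1 : ∫ ω, (‖q₀‖ - 2 * ‖X ω‖) = ‖q₀‖ - 2 * ∫ ω, ‖X ω‖ := by
      rw [integral_sub (integrable_const _) (hint.const_mul 2), integral_const_mul]
      simp
    rw [← h1]
    refine integral_mono ((integrable_const _).sub (hint.const_mul 2)) hI fun ω => ?_
    have h2 := norm_sub_norm_le q₀ (X ω)
    rw [norm_sub_rev] at h2
    dsimp only
    linarith
  have h3 := mul_le_mul_of_nonneg_left hin hα.1.le
  rw [le_div_iff₀ hα1]
  linarith
end

section
/- Let d ≥ 2 and let X be an ℝ^d-valued random vector. Suppose there exist constants A > 0, β > 0 and c₀ > 0 such that P(‖X‖ > c) ≤ A·c^{−β} for all c ≥ c₀. Then for every ε ∈ (0,β) there exist a constant C > 0 and α₀ ∈ (0,1) such that for all α ∈ (α₀,1), every unit vector u ∈ ℝ^d and every geometric quantile q₀ = q_X(αu) (minimizer of f_{αu}), one has ‖q₀‖ ≤ C·(1−α)^{−(β+1)/(β−ε)}. -/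
/-!
Write `R = ‖q₀‖` and `p = P(‖X‖ > c)`. Since `‖X - q₀‖ - ‖X‖` is at least `R - 2c` where `‖X‖ ≤ c`
and at least `-R` everywhere, `E[‖X - q₀‖ - ‖X‖] ≥ R - 2c - 2Rp`. Minimality of `q₀` against the
competitor `q = 0`, whose objective value is `0`, then gives `R (1 - α - 2p) ≤ 2c`.
Choosing `c = (4A / (1 - α))^{1/β}`, so that `p ≤ (1 - α) / 4`, yields
`R ≤ 4c / (1 - α) = 4 (4A)^{1/β} (1 - α)^{-(β+1)/β}`. This is stronger than the claim, because
`1 - α < 1` and `(β+1)/β ≤ (β+1)/(β-ε)`.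
-/

open MeasureTheory
open scoped RealInnerProductSpace ProbabilityTheory

/-- Truncation at level `c`: a lower bound for the expected increment of the norm that needs no
moment assumption on `X`. -/
lemma le_integral_norm_sub_sub_norm
    {d : ℕ} {Ω : Type*} [MeasureSpace Ω] [IsProbabilityMeasure (ℙ : Measure Ω)]
    (X : Ω → EuclideanSpace ℝ (Fin d)) (hX : Measurable X)
    (q : EuclideanSpace ℝ (Fin d)) (c : ℝ) (hc : 0 ≤ c) :
    ‖q‖ - 2 * c - 2 * ‖q‖ * (ℙ {ω | c < ‖X ω‖}).toReal ≤ ∫ ω, (‖X ω - q‖ - ‖X ω‖) := by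
  have hS : MeasurableSet {ω | c < ‖X ω‖} := measurableSet_lt measurable_const hX.norm
  have hint : Integrable (fun ω => ‖X ω - q‖ - ‖X ω‖) (ℙ : Measure Ω) := by
    refine Integrable.of_bound
      (((hX.sub_const q).norm.sub hX.norm).aestronglyMeasurable) ‖q‖ (ae_of_all _ fun ω => ?_)
    have h := abs_norm_sub_norm_le (X ω - q) (X ω)
    rwa [sub_sub_cancel_left, norm_neg] at h
  have hind : Integrable ({ω | c < ‖X ω‖}.indicator fun _ => 2 * ‖q‖) (ℙ : Measure Ω) :=
    (integrable_const _).indicator hS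
  calc ‖q‖ - 2 * c - 2 * ‖q‖ * (ℙ {ω | c < ‖X ω‖}).toReal
      = ∫ ω, ((‖q‖ - 2 * c) - {ω | c < ‖X ω‖}.indicator (fun _ => 2 * ‖q‖) ω) := by
        rw [integral_sub (integrable_const _) hind, integral_indicator_const _ hS]
        simp [Measure.real, mul_comm]
    _ ≤ ∫ ω, (‖X ω - q‖ - ‖X ω‖) := by
        refine integral_mono ((integrable_const _).sub hind) hint fun ω => ?_
        by_cases h : c < ‖X ω‖
        · have h1 : ‖X ω‖ ≤ ‖X ω - q‖ + ‖q‖ := norm_le_norm_sub_add _ _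
          rw [Set.indicator_of_mem (by exact h)]
          linarith
        · have h2 : ‖q‖ ≤ ‖X ω - q‖ + ‖X ω‖ := by
            rw [norm_sub_rev]; exact norm_le_norm_sub_add _ _
          rw [Set.indicator_of_notMem (by exact h)]
          linarith

/-- Corollary (rate of growth under a polynomial tail bound): if
`P(‖X‖ > c) ≤ A c^{−β}` for all `c ≥ c₀`, then for every `ε ∈ (0,β)` there are
`C > 0` and `α₀ ∈ (0,1)` such that for all `α ∈ (α₀,1)`, every unit `u` and every
geometric quantile `q₀ = q_X(αu)`, `‖q₀‖ ≤ C (1−α)^{−(β+1)/(β−ε)}`. -/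
theorem geometric_quantile_upper_bound_polynomial_tail
    {d : ℕ} (hd : 2 ≤ d)
    {Ω : Type*} [MeasureSpace Ω] [IsProbabilityMeasure (ℙ : Measure Ω)]
    (X : Ω → EuclideanSpace ℝ (Fin d)) (hX : Measurable X)
    (A β c₀ : ℝ) (hA : 0 < A) (hβ : 0 < β) (hc₀ : 0 < c₀)
    (htail : ∀ c : ℝ, c₀ ≤ c → (ℙ {ω | c < ‖X ω‖}).toReal ≤ A * c ^ (-β)) :
    ∀ ε : ℝ, ε ∈ Set.Ioo (0 : ℝ) β →
      ∃ C : ℝ, 0 < C ∧ ∃ α₀ : ℝ, α₀ ∈ Set.Ioo (0 : ℝ) 1 ∧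
        ∀ α : ℝ, α ∈ Set.Ioo α₀ 1 →
          ∀ u : EuclideanSpace ℝ (Fin d), ‖u‖ = 1 →
            ∀ q₀ : EuclideanSpace ℝ (Fin d),
              (∀ q : EuclideanSpace ℝ (Fin d), gqObj X α u q₀ ≤ gqObj X α u q) →
              ‖q₀‖ ≤ C * (1 - α) ^ (-((β + 1) / (β - ε))) := by
  intro ε hε
  obtain ⟨hε0, hεβ⟩ := hε
  have hc₀β : 0 < 4 * A * c₀ ^ (-β) := by positivity
  refine ⟨4 * (4 * A) ^ (1 / β), by positivity, max (1 / 2) (1 - 4 * A * c₀ ^ (-β)),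
    ⟨by positivity, max_lt (by norm_num) (by linarith)⟩, ?_⟩
  rintro α ⟨hα0, hα1⟩ u hu q₀ hq₀
  obtain ⟨hα2, hα3⟩ := max_lt_iff.1 hα0
  have hs : 0 < 1 - α := by linarith
  set s := 1 - α with hs_def
  -- The truncation level at which the tail bound `A c^{-β}` equals `(1 - α) / 4`.
  set c := (4 * A / s) ^ (1 / β) with hc_def
  have hcβ : A * c ^ (-β) = s / 4 := by
    rw [hc_def, ← Real.rpow_mul (by positivity), show 1 / β * -β = -1 by field_simp,
      Real.rpow_neg_one]
    field_simp
  have hc : c₀ ≤ c := by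
    rw [hc_def, one_div, Real.le_rpow_inv_iff_of_pos hc₀.le (by positivity) hβ,
      le_div_iff₀ hs]
    have h1 : s ≤ 4 * A * c₀ ^ (-β) := by linarith
    calc c₀ ^ β * s ≤ c₀ ^ β * (4 * A * c₀ ^ (-β)) := by gcongr
      _ = 4 * A := by rw [Real.rpow_neg hc₀.le]; field_simp
  have hp := (htail c hc).trans_eq hcβ
  have hmin : gqObj X α u q₀ ≤ 0 := (hq₀ 0).trans_eq (by simp [gqObj])
  have hlow := le_integral_norm_sub_sub_norm X hX q₀ c (hc₀.le.trans hc)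
  have hinner : ⟪u, q₀⟫ ≤ ‖q₀‖ := by simpa [hu] using real_inner_le_norm u q₀
  have hR := norm_nonneg q₀
  have hαR : α * ⟪u, q₀⟫ ≤ α * ‖q₀‖ := mul_le_mul_of_nonneg_left hinner (by linarith)
  have hpR := mul_le_mul_of_nonneg_left hp hR
  unfold gqObj at hmin
  have hkey : ‖q₀‖ * s ≤ 4 * c := by
    rw [hs_def] at hpR ⊢
    linarith
  have hexp : -((β + 1) / (β - ε)) ≤ -(1 / β) - 1 := by
    have h1 : (β + 1) / β ≤ (β + 1) / (β - ε) :=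
      div_le_div_of_nonneg_left (by linarith) (by linarith) (by linarith)
    have h2 : (β + 1) / β = 1 + 1 / β := by field_simp
    linarith
  calc ‖q₀‖ ≤ 4 * c / s := (le_div_iff₀ hs).2 hkey
    _ = 4 * (4 * A) ^ (1 / β) * s ^ (-(1 / β) - 1) := by
      rw [hc_def, Real.div_rpow (by positivity) hs.le, Real.rpow_sub hs, Real.rpow_neg hs.le,
        Real.rpow_one]
      field_simp
    _ ≤ 4 * (4 * A) ^ (1 / β) * s ^ (-((β + 1) / (β - ε))) := by
      gcongr ?_ * ?_
      exact Real.rpow_le_rpow_of_exponent_ge hs (by linarith) hexp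
end

section
/- Let U and Ū be independent, identically distributed ℝ^d-valued random vectors with ‖U‖ = 1 almost surely, let A and B be measurable subsets of ℝ^d, and let δ ≥ 0 satisfy ‖a − b‖ ≥ δ for all a ∈ A and b ∈ B. Then ‖E[U]‖² ≤ 1 − (1/2)·δ²·P(U ∈ A)·P(U ∈ B). -/
/-!
The proof expresses `‖E[U]‖²` as `E[⟪U, V⟫]` by independence and equality in law. For unit vectors
`⟪U, V⟫ = 1 - ‖U - V‖² / 2`, and on the event `{U ∈ A} ∩ {V ∈ B}`, whose probability is
`P(U ∈ A) P(U ∈ B)`, the distance `‖U - V‖` is at least `δ`; elsewhere `⟪U, V⟫ ≤ 1`.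
Integrating this pointwise bound gives the claim.
-/

open MeasureTheory ProbabilityTheory
open scoped RealInnerProductSpace ProbabilityTheory

/-- If `U, Ū` are i.i.d. random unit vectors of `ℝ^d`, and `A, B` are measurable sets
with `‖a − b‖ ≥ δ` for all `a ∈ A`, `b ∈ B`, then
`‖E[U]‖² ≤ 1 − (1/2) δ² P(U ∈ A) P(U ∈ B)`. -/
theorem norm_sq_mean_unit_vector_le
    {d : ℕ}
    {Ω : Type*} [MeasureSpace Ω] [IsProbabilityMeasure (ℙ : Measure Ω)]
    (U V : Ω → EuclideanSpace ℝ (Fin d))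
    (hU : Measurable U) (hV : Measurable V)
    (hindep : IndepFun U V ℙ)
    (hid : IdentDistrib U V ℙ ℙ)
    (hnorm : ∀ᵐ ω, ‖U ω‖ = 1)
    (A B : Set (EuclideanSpace ℝ (Fin d)))
    (hA : MeasurableSet A) (hB : MeasurableSet B)
    (δ : ℝ) (hδ : 0 ≤ δ)
    (hsep : ∀ a ∈ A, ∀ b ∈ B, δ ≤ ‖a - b‖) :
    ‖∫ ω, U ω‖ ^ 2 ≤
      1 - (1 / 2) * δ ^ 2 * (ℙ (U ⁻¹' A)).toReal * (ℙ (U ⁻¹' B)).toReal := by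
  have hnormV : ∀ᵐ ω, ‖V ω‖ = 1 :=
    hid.ae_snd (p := fun x => ‖x‖ = 1) (measurableSet_eq_fun measurable_norm measurable_const) hnorm
  have hUi : Integrable U (ℙ : Measure Ω) :=
    Integrable.of_bound hU.aestronglyMeasurable 1 (hnorm.mono fun _ h => h.le)
  have hVi : Integrable V (ℙ : Measure Ω) := hid.integrable_iff.1 hUi
  have hE : ‖∫ ω, U ω‖ ^ 2 = ∫ ω, ⟪U ω, V ω⟫ := by
    have hbil : ∫ ω, ⟪U ω, V ω⟫ = ⟪∫ ω, U ω, ∫ ω, V ω⟫ :=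
      hindep.integral_bilin hUi hVi (innerSL ℝ)
    rw [hbil, ← hid.integral_eq, real_inner_self_eq_norm_sq]
  have hP : (ℙ : Measure Ω).real (U ⁻¹' A ∩ V ⁻¹' B)
      = (ℙ (U ⁻¹' A)).toReal * (ℙ (U ⁻¹' B)).toReal := by
    rw [measureReal_def, hindep.measure_inter_preimage_eq_mul A B hA hB, ENNReal.toReal_mul,
      hid.measure_mem_eq hB]
  have hS : MeasurableSet (U ⁻¹' A ∩ V ⁻¹' B) := (hU hA).inter (hV hB)
  have hind : Integrable ((U ⁻¹' A ∩ V ⁻¹' B).indicator fun _ => 1 / 2 * δ ^ 2) (ℙ : Measure Ω) :=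
    (integrable_const _).indicator hS
  have hinner : Integrable (fun ω => ⟪U ω, V ω⟫) (ℙ : Measure Ω) := by
    refine Integrable.of_bound (hU.inner hV).aestronglyMeasurable 1 ?_
    filter_upwards [hnorm, hnormV] with ω h1 h2
    simpa [h1, h2] using norm_inner_le_norm (𝕜 := ℝ) (U ω) (V ω)
  calc ‖∫ ω, U ω‖ ^ 2 = ∫ ω, ⟪U ω, V ω⟫ := hE
    _ ≤ ∫ ω, (1 - (U ⁻¹' A ∩ V ⁻¹' B).indicator (fun _ => 1 / 2 * δ ^ 2) ω) := by
      refine integral_mono_ae hinner ((integrable_const _).sub hind) ?_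
      filter_upwards [hnorm, hnormV] with ω h1 h2
      have hdist := norm_sub_sq_real (U ω) (V ω)
      rw [h1, h2] at hdist
      by_cases hω : ω ∈ U ⁻¹' A ∩ V ⁻¹' B
      · have hsq : δ ^ 2 ≤ ‖U ω - V ω‖ ^ 2 := pow_le_pow_left₀ hδ (hsep _ hω.1 _ hω.2) 2
        rw [Set.indicator_of_mem hω]
        linarith
      · rw [Set.indicator_of_notMem hω]
        linarith [sq_nonneg ‖U ω - V ω‖]
    _ = 1 - (1 / 2) * δ ^ 2 * (ℙ (U ⁻¹' A)).toReal * (ℙ (U ⁻¹' B)).toReal := by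
      rw [integral_sub (integrable_const _) hind, integral_indicator_const _ hS, hP]
      simp only [integral_const, probReal_univ, smul_eq_mul]
      ring
end

section
/- Let q and x be vectors in ℝ^d with q ≠ 0, x ≠ 0 and x ≠ q, and let c ∈ [0,1]. If ⟨x, −q⟩ ≥ c·‖x‖·‖q‖, then ⟨x − q, −q⟩ ≥ c·‖x − q‖·‖q‖. In other words, if the direction x/‖x‖ lies in the closed circular cone of axis −q/‖q‖ and aperture arccos(c), then so does the direction (x − q)/‖x − q‖. -/
open scoped RealInnerProductSpace

/-- Cone stability: if the direction of `x` lies in the closed circular cone of axis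
`−q/‖q‖` and aperture `arccos c`, then so does the direction of `x − q`; i.e.
`⟨x, −q⟩ ≥ c‖x‖‖q‖` implies `⟨x − q, −q⟩ ≥ c‖x − q‖‖q‖`. -/
theorem cone_stable_under_translation
    {d : ℕ} (q x : EuclideanSpace ℝ (Fin d))
    (hq : q ≠ 0) (hx : x ≠ 0) (hxq : x ≠ q)
    (c : ℝ) (hc : c ∈ Set.Icc (0 : ℝ) 1)
    (h : c * ‖x‖ * ‖q‖ ≤ ⟪x, -q⟫) :
    c * ‖x - q‖ * ‖q‖ ≤ ⟪x - q, -q⟫ := by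
  have hexp : ⟪x - q, -q⟫ = ⟪x, -q⟫ + ‖q‖ * ‖q‖ := by
    rw [inner_sub_left, inner_neg_right q q, real_inner_self_eq_norm_mul_norm, sub_neg_eq_add]
  -- Triangle inequality on the left; the extra term `c‖q‖²` is absorbed by `‖q‖²` as `c ≤ 1`.
  calc c * ‖x - q‖ * ‖q‖ ≤ c * (‖x‖ + ‖q‖) * ‖q‖ := by
        have := hc.1
        gcongr
        exact norm_sub_le x q
    _ = c * ‖x‖ * ‖q‖ + c * (‖q‖ * ‖q‖) := by ring
    _ ≤ ⟪x, -q⟫ + ‖q‖ * ‖q‖ :=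
        add_le_add h (mul_le_of_le_one_left (by positivity) hc.2)
    _ = ⟪x - q, -q⟫ := hexp.symm
end

section
/- Let d ≥ 2, let X be an ℝ^d-valued random vector whose law is absolutely continuous with respect to Lebesgue measure and whose support is all of ℝ^d, and let γ ∈ (0,1). Then inf over unit vectors u ∈ ℝ^d of P(⟨u, X⟩ ≥ ‖X‖·√(1−γ²)) is strictly positive; consequently the constant M_γ = (1−γ)·inf_{u unit} P(⟨u, X⟩ ≥ ‖X‖·√(1−γ²)) satisfies 0 < M_γ < 1. -/
/-!
For `s = √(1 - γ²) < 1` and `δ = (1 - s) / (1 + s)`, the cone `‖x‖ s ≤ ⟪u, x⟫` around a unit vector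
`u` contains the ball of radius `δ` around `u` (`cone_of_mem_ball`). For `u` in the ball
`ball v (δ / 2)` this bigger ball contains `ball v (δ / 2)`, which has positive probability because
the law of `X` charges open sets. Hence the probability of the cone is locally bounded below by a
positive constant, and compactness of the unit sphere makes the bound uniform. The upper bound is
immediate, since `1 - γ < 1` and the infimum of probabilities over a nonempty set is at most `1`.
-/

open MeasureTheory
open scoped RealInnerProductSpace ProbabilityTheory

/-- The geometric constant `M_γ` (up to the factor `1−γ`):
`inf` over unit vectors `u` of `P(⟨u,X⟩ ≥ ‖X‖√(1−γ²))`. -/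
noncomputable def angularInf {d : ℕ} {Ω : Type*} [MeasureSpace Ω]
    (X : Ω → EuclideanSpace ℝ (Fin d)) (γ : ℝ) : ℝ :=
  ⨅ u : Metric.sphere (0 : EuclideanSpace ℝ (Fin d)) 1,
    (ℙ {ω | ‖X ω‖ * Real.sqrt (1 - γ ^ 2) ≤
        ⟪(u : EuclideanSpace ℝ (Fin d)), X ω⟫}).toReal

/-- The ball of radius `(1 - s) / (1 + s)` around a unit vector `u` lies in the cone around `u`
with cosine `s`. -/
lemma cone_of_mem_ball {E : Type*} [NormedAddCommGroup E] [InnerProductSpace ℝ E] {s : ℝ}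
    (hs0 : 0 ≤ s) {u x : E} (hu : ‖u‖ = 1) (hx : dist x u < (1 - s) / (1 + s)) :
    ‖x‖ * s ≤ ⟪u, x⟫ := by
  rw [dist_eq_norm, lt_div_iff₀ (by linarith)] at hx
  have h1 : ‖x‖ ≤ ‖x - u‖ + 1 := by
    simpa [hu] using norm_add_le (x - u) u
  have h2 : ⟪u, x⟫ = 1 + ⟪u, x - u⟫ := by
    rw [inner_sub_right, real_inner_self_eq_norm_sq, hu]; ring
  have h3 : -‖x - u‖ ≤ ⟪u, x - u⟫ := by
    have h := abs_real_inner_le_norm u (x - u)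
    rw [hu, one_mul] at h
    exact neg_le_of_abs_le h
  have h4 := mul_le_mul_of_nonneg_right h1 hs0
  linarith

/-- For a fully supported, absolutely continuous random vector `X` on `ℝ^d` (`d ≥ 2`)
and `γ ∈ (0,1)`, the infimum over unit `u` of `P(⟨u,X⟩ ≥ ‖X‖√(1−γ²))` is strictly
positive, and `M_γ = (1−γ) ⋅ (that infimum)` satisfies `0 < M_γ < 1`. -/
theorem angular_inf_pos_and_Mgamma_in_unit_interval
    {d : ℕ} (hd : 2 ≤ d)
    {Ω : Type*} [MeasureSpace Ω] [IsProbabilityMeasure (ℙ : Measure Ω)]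
    (X : Ω → EuclideanSpace ℝ (Fin d)) (hX : Measurable X)
    (habs : Measure.map X ℙ ≪ (volume : Measure (EuclideanSpace ℝ (Fin d))))
    (hsupp : (Measure.map X ℙ).IsOpenPosMeasure)
    (γ : ℝ) (hγ : γ ∈ Set.Ioo (0 : ℝ) 1) :
    0 < angularInf X γ ∧ 0 < (1 - γ) * angularInf X γ ∧
      (1 - γ) * angularInf X γ < 1 := by
  obtain ⟨h0, h1⟩ := hγ
  set s := Real.sqrt (1 - γ ^ 2) with hs
  have hs0 : 0 ≤ s := Real.sqrt_nonneg _
  have hs1 : s < 1 := by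
    rw [hs, Real.sqrt_lt' one_pos]
    nlinarith [pow_pos h0 2]
  have hδ : 0 < (1 - s) / (1 + s) := div_pos (by linarith) (by linarith)
  have : Nonempty (Fin d) := ⟨⟨0, by omega⟩⟩
  obtain ⟨c, hc, hbound⟩ : ∃ c : ℝ, 0 < c ∧
      ∀ u ∈ Metric.sphere (0 : EuclideanSpace ℝ (Fin d)) 1,
        c ≤ (ℙ {ω | ‖X ω‖ * s ≤ ⟪u, X ω⟫}).toReal := by
    have hcompact := isCompact_sphere (0 : EuclideanSpace ℝ (Fin d)) 1
    refine hcompact.induction_on (p := fun K => ∃ c : ℝ, 0 < c ∧ ∀ u ∈ K,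
      c ≤ (ℙ {ω | ‖X ω‖ * s ≤ ⟪u, X ω⟫}).toReal) ?_ ?_ ?_ ?_
    · exact ⟨1, one_pos, by simp⟩
    · rintro K L hKL ⟨c, hc, h⟩
      exact ⟨c, hc, fun u hu => h u (hKL hu)⟩
    · rintro K L ⟨c, hc, h⟩ ⟨c', hc', h'⟩
      exact ⟨min c c', lt_min hc hc', fun u hu => hu.elim
        (fun hu => (min_le_left _ _).trans (h u hu))
        (fun hu => (min_le_right _ _).trans (h' u hu))⟩
    · intro v _
      set B := Metric.ball v ((1 - s) / (1 + s) / 2) with hB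
      refine ⟨Metric.sphere 0 1 ∩ B, Filter.inter_mem self_mem_nhdsWithin
        (mem_nhdsWithin_of_mem_nhds (Metric.ball_mem_nhds v (half_pos hδ))),
        (ℙ (X ⁻¹' B)).toReal, ENNReal.toReal_pos ?_ (measure_ne_top _ _), ?_⟩
      · rw [← Measure.map_apply hX Metric.isOpen_ball.measurableSet]
        exact (Metric.measure_ball_pos _ v (half_pos hδ)).ne'
      · rintro u ⟨hu, huB⟩
        refine ENNReal.toReal_mono (measure_ne_top _ _) (measure_mono fun ω hω => ?_)
        refine cone_of_mem_ball hs0 (mem_sphere_zero_iff_norm.mp hu) ?_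
        have hd1 := dist_triangle_right (X ω) u v
        have hd2 : dist (X ω) v < _ := hω
        have hd3 : dist u v < _ := huB
        linarith
  have : Nonempty (Metric.sphere (0 : EuclideanSpace ℝ (Fin d)) 1) :=
    (NormedSpace.sphere_nonempty.mpr zero_le_one).to_subtype
  have hpos : 0 < angularInf X γ := hc.trans_le (le_ciInf fun u => hbound u u.2)
  have hle : angularInf X γ ≤ 1 := by
    obtain ⟨u⟩ := this
    refine (ciInf_le ⟨0, ?_⟩ u).trans measureReal_le_one
    rintro _ ⟨w, rfl⟩
    exact ENNReal.toReal_nonneg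
  exact ⟨hpos, mul_pos (by linarith) hpos, by nlinarith⟩
end

section
/- Let d ≥ 2, let X be an ℝ^d-valued random vector whose law has no atoms, let γ ∈ (0,1), and let M_γ = (1−γ)·inf over unit vectors u of P(⟨u, X⟩ ≥ ‖X‖·√(1−γ²)). Then for every q ∈ ℝ^d with q ≠ 0, the unit random vector U_q = (X − q)/‖X − q‖ (defined almost surely since P(X = q) = 0) satisfies ‖E[U_q]‖² ≤ 1 − M_γ · P(⟨X − q, q⟩ ≥ 0). -/
/-!
Write `U = U_q`, `m = E[U]`, and let `U'` be an independent copy of `U`. Then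
`1 - ‖m‖² = E[1 - ⟨U, m⟩]`, and `1 - ⟨U, m⟩ = E'[1 - ⟨U, U'⟩] ≥ 0` pointwise. It therefore suffices
to see that `1 - ⟨w, m⟩ ≥ M_γ` for every value `w` of `U` with `⟨w, q⟩ ≥ 0`.

Since `d ≥ 2`, there is a unit vector `u ⟂ w`, and up to a sign `⟨q, u⟩ ≤ 0`. If `x` lies in the cone
`⟨u, x⟩ ≥ ‖x‖ √(1 - γ²)`, then translating `x` by `-q` increases its `u`-component and decreases its
`w`-component, so `⟨w, x - q⟩ ≤ γ ‖x - q‖` (`inner_le_of_mem_cone`). Thus `1 - ⟨w, U'⟩ ≥ 1 - γ`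
on an event of probability at least the infimum in the definition of `M_γ`.

Where `X = q`, the formula for `U` gives `0`; every estimate only uses `‖U‖ ≤ 1`, so it covers this
value too.
-/

open MeasureTheory
open scoped RealInnerProductSpace ProbabilityTheory

/-- The geometric constant `M_γ`:
`M_γ = (1−γ) ⋅ inf` over unit vectors `u` of `P(⟨u,X⟩ ≥ ‖X‖√(1−γ²))`. -/
noncomputable def Mgamma {d : ℕ} {Ω : Type*} [MeasureSpace Ω]
    (X : Ω → EuclideanSpace ℝ (Fin d)) (γ : ℝ) : ℝ :=
  (1 - γ) * ⨅ u : Metric.sphere (0 : EuclideanSpace ℝ (Fin d)) 1,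
    (ℙ {ω | ‖X ω‖ * Real.sqrt (1 - γ ^ 2) ≤
        ⟪(u : EuclideanSpace ℝ (Fin d)), X ω⟫}).toReal

/-- In dimension at least two, any vector `w` has a unit normal lying in the half-space
`⟨q, u⟩ ≤ 0`. -/
lemma exists_unit_normal {d : ℕ} (hd : 2 ≤ d) (w q : EuclideanSpace ℝ (Fin d)) :
    ∃ u : EuclideanSpace ℝ (Fin d), ‖u‖ = 1 ∧ ⟪w, u⟫ = 0 ∧ ⟪q, u⟫ ≤ 0 := by
  have hne : (Submodule.span ℝ {w})ᗮ ≠ ⊥ := by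
    intro h
    have h1 := Submodule.finrank_add_finrank_orthogonal (Submodule.span ℝ {w})
    have h2 : Module.finrank ℝ (Submodule.span ℝ {w}) ≤ 1 := by
      simpa using finrank_span_le_card (R := ℝ) ({w} : Set (EuclideanSpace ℝ (Fin d)))
    rw [h, finrank_bot, finrank_euclideanSpace_fin] at h1
    omega
  obtain ⟨v, hv, hv0⟩ := Submodule.exists_mem_ne_zero_of_ne_bot hne
  rw [Submodule.mem_orthogonal_singleton_iff_inner_right] at hv
  have hn : ‖(‖v‖⁻¹ • v)‖ = 1 := by
    rw [norm_smul, norm_inv, norm_norm, inv_mul_cancel₀ (norm_ne_zero_iff.mpr hv0)]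
  have ho : ⟪w, ‖v‖⁻¹ • v⟫ = 0 := by rw [inner_smul_right, hv, mul_zero]
  rcases le_total ⟪q, ‖v‖⁻¹ • v⟫ 0 with h | h
  · exact ⟨_, hn, ho, h⟩
  · exact ⟨-(‖v‖⁻¹ • v), by rw [norm_neg, hn], by rw [inner_neg_right, ho, neg_zero],
      by rw [inner_neg_right]; linarith⟩

/-- Bessel's inequality for the orthogonal pair `w, u` with `‖w‖ ≤ 1` and `‖u‖ = 1`. -/
lemma inner_sq_add_inner_sq_le {E : Type*} [NormedAddCommGroup E] [InnerProductSpace ℝ E]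
    {w u : E} (hw : ‖w‖ ≤ 1) (hu : ‖u‖ = 1) (hwu : ⟪w, u⟫ = 0) (y : E) :
    ⟪w, y⟫ ^ 2 + ⟪u, y⟫ ^ 2 ≤ ‖y‖ ^ 2 := by
  have h := sq_nonneg ‖y - ⟪w, y⟫ • w - ⟪u, y⟫ • u‖
  simp only [← real_inner_self_eq_norm_sq, inner_sub_left, inner_sub_right, inner_smul_left,
    inner_smul_right, hwu, real_inner_comm w u, real_inner_comm w y, real_inner_comm u y,
    RCLike.conj_to_real] at h
  simp only [real_inner_self_eq_norm_sq, hu] at h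
  have hw2 : ‖w‖ ^ 2 ≤ 1 := by nlinarith [norm_nonneg w]
  nlinarith [mul_le_mul_of_nonneg_left hw2 (sq_nonneg ⟪w, y⟫)]

/-- Translating by `-q` a point of the cone of axis `u` keeps it outside the cone
`⟨w, y⟩ > γ ‖y‖` of axis `w ⟂ u`, provided that `⟨q, u⟩ ≤ 0 ≤ ⟨w, q⟩`. -/
lemma inner_le_of_mem_cone {E : Type*} [NormedAddCommGroup E] [InnerProductSpace ℝ E]
    {w u q x : E} {γ : ℝ} (hγ0 : 0 < γ) (hγ1 : γ < 1)
    (hw : ‖w‖ ≤ 1) (hu : ‖u‖ = 1) (hwu : ⟪w, u⟫ = 0) (hqu : ⟪q, u⟫ ≤ 0) (hwq : 0 ≤ ⟪w, q⟫)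
    (hx : ‖x‖ * Real.sqrt (1 - γ ^ 2) ≤ ⟪u, x⟫) :
    ⟪w, x - q⟫ ≤ γ * ‖x - q‖ := by
  have hs0 : 0 ≤ 1 - γ ^ 2 := by nlinarith
  have hb0 : 0 ≤ ⟪u, x⟫ := le_trans (by positivity) hx
  have hb : ‖x‖ ^ 2 * (1 - γ ^ 2) ≤ ⟪u, x⟫ ^ 2 := by
    have := pow_le_pow_left₀ (by positivity) hx 2
    rwa [mul_pow, Real.sq_sqrt hs0] at this
  have h1 := inner_sq_add_inner_sq_le hw hu hwu x
  have h2 := inner_sq_add_inner_sq_le hw hu hwu (x - q)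
  have hp : ⟪w, x - q⟫ ≤ ⟪w, x⟫ := by rw [inner_sub_right]; linarith
  have hr : ⟪u, x⟫ ≤ ⟪u, x - q⟫ := by
    rw [inner_sub_right, real_inner_comm q u]; linarith
  rcases le_total ⟪w, x - q⟫ 0 with h | h
  · exact h.trans (by positivity)
  · refine (pow_le_pow_iff_left₀ h (by positivity) two_ne_zero).mp ?_
    have hp2 := pow_le_pow_left₀ h hp 2
    have hr2 := pow_le_pow_left₀ hb0 hr 2
    have h3 := mul_le_mul_of_nonneg_right h1 hs0
    have h4 := mul_le_mul_of_nonneg_left h2 (sq_nonneg γ)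
    have h5 := mul_le_mul_of_nonneg_left hr2 (sq_nonneg γ)
    have h6 := mul_le_mul_of_nonneg_right hp2 hs0
    rw [mul_pow]
    nlinarith

/-- If the law of `X` has no atoms, then for every `q ≠ 0` the unit random vector
`U_q = (X − q)/‖X − q‖` satisfies `‖E[U_q]‖² ≤ 1 − M_γ ⋅ P(⟨X − q, q⟩ ≥ 0)`. -/
theorem norm_sq_mean_Uq_le
    {d : ℕ} (hd : 2 ≤ d)
    {Ω : Type*} [MeasureSpace Ω] [IsProbabilityMeasure (ℙ : Measure Ω)]
    (X : Ω → EuclideanSpace ℝ (Fin d)) (hX : Measurable X)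
    (hatoms : NoAtoms (Measure.map X ℙ))
    (γ : ℝ) (hγ : γ ∈ Set.Ioo (0 : ℝ) 1)
    (q : EuclideanSpace ℝ (Fin d)) (hq : q ≠ 0) :
    ‖∫ ω, (‖X ω - q‖)⁻¹ • (X ω - q)‖ ^ 2 ≤
      1 - Mgamma X γ * (ℙ {ω | 0 ≤ ⟪X ω - q, q⟫}).toReal := by
  obtain ⟨hγ0, hγ1⟩ := hγ
  set U : Ω → EuclideanSpace ℝ (Fin d) := fun ω => (‖X ω - q‖)⁻¹ • (X ω - q) with hU
  set m := ∫ ω, U ω with hm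
  have hUle : ∀ ω, ‖U ω‖ ≤ 1 := fun ω => by
    simp only [hU, norm_smul, norm_inv, norm_norm]
    exact inv_mul_le_one
  have hUmeas : Measurable U := by fun_prop
  have hUint : Integrable U :=
    Integrable.of_bound hUmeas.aestronglyMeasurable 1 (.of_forall hUle)
  have hint : ∀ w : EuclideanSpace ℝ (Fin d), Integrable fun ω => 1 - ⟪w, U ω⟫ :=
    fun w => (integrable_const _).sub (hUint.const_inner w)
  have hkey : ∀ w : EuclideanSpace ℝ (Fin d), ∫ ω, (1 - ⟪w, U ω⟫) = 1 - ⟪w, m⟫ := fun w => by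
    rw [integral_sub (integrable_const _) (hUint.const_inner w), integral_inner hUint w]
    simp [hm]
  have hpos : ∀ w : EuclideanSpace ℝ (Fin d), ‖w‖ ≤ 1 → ∀ ω, 0 ≤ 1 - ⟪w, U ω⟫ :=
    fun w hw ω => by
      have := (real_inner_le_norm w (U ω)).trans
        (mul_le_one₀ hw (norm_nonneg _) (hUle ω))
      linarith
  have hcone : ∀ w : EuclideanSpace ℝ (Fin d), ‖w‖ ≤ 1 → 0 ≤ ⟪w, q⟫ →
      Mgamma X γ ≤ 1 - ⟪w, m⟫ := fun w hw hwq => by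
    obtain ⟨u, hu, hwu, hqu⟩ := exists_unit_normal hd w q
    set C : Set Ω := {ω | ‖X ω‖ * Real.sqrt (1 - γ ^ 2) ≤ ⟪u, X ω⟫} with hC
    have hCmeas : MeasurableSet C := measurableSet_le (by fun_prop) (by fun_prop)
    have hM : Mgamma X γ ≤ (1 - γ) * (ℙ C).toReal := by
      refine mul_le_mul_of_nonneg_left ?_ (by linarith)
      exact ciInf_le ⟨0, by rintro _ ⟨v, rfl⟩; exact ENNReal.toReal_nonneg⟩
        (⟨u, by simp [hu]⟩ : Metric.sphere (0 : EuclideanSpace ℝ (Fin d)) 1)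
    have hI : ∫ ω, C.indicator (fun _ => 1 - γ) ω = (1 - γ) * (ℙ C).toReal := by
      rw [integral_indicator_const _ hCmeas, smul_eq_mul, mul_comm, measureReal_def]
    rw [← hkey w]
    refine hM.trans (hI ▸ integral_mono ((integrable_const _).indicator hCmeas) (hint w) ?_)
    intro ω
    by_cases hω : ω ∈ C
    · have h := inner_le_of_mem_cone hγ0 hγ1 hw hu hwu hqu hwq hω
      have h' : ⟪w, U ω⟫ ≤ γ := by
        simp only [hU, inner_smul_right]
        calc ‖X ω - q‖⁻¹ * ⟪w, X ω - q⟫ ≤ ‖X ω - q‖⁻¹ * (γ * ‖X ω - q‖) := by gcongr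
          _ = γ * (‖X ω - q‖⁻¹ * ‖X ω - q‖) := by ring
          _ ≤ γ * 1 := by gcongr; exact inv_mul_le_one
          _ = γ := mul_one γ
      simp only [Set.indicator_of_mem hω]
      linarith
    · simp only [Set.indicator_of_notMem hω]
      exact hpos w hw ω
  set A : Set Ω := {ω | 0 ≤ ⟪X ω - q, q⟫} with hA
  have hAmeas : MeasurableSet A := measurableSet_le (by fun_prop) (by fun_prop)
  have hI : ∫ ω, A.indicator (fun _ => Mgamma X γ) ω = Mgamma X γ * (ℙ A).toReal := by
    rw [integral_indicator_const _ hAmeas, smul_eq_mul, mul_comm, measureReal_def]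
  have hmain : Mgamma X γ * (ℙ A).toReal ≤ 1 - ⟪m, m⟫ := by
    rw [← hI, ← hkey m]
    refine integral_mono ((integrable_const _).indicator hAmeas) (hint m) fun ω => ?_
    by_cases hω : ω ∈ A
    · simp only [Set.indicator_of_mem hω]
      rw [real_inner_comm]
      refine hcone (U ω) (hUle ω) ?_
      simp only [hU, real_inner_smul_left]
      exact mul_nonneg (by positivity) hω
    · simp only [Set.indicator_of_notMem hω]
      -- `1 - ⟨m, U ω⟩` is itself the mean of the nonnegative variable `1 - ⟨U ω, U'⟩`.
      rw [real_inner_comm, ← hkey (U ω)]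
      exact integral_nonneg (hpos (U ω) (hUle ω))
  rw [real_inner_self_eq_norm_sq] at hmain
  linarith
end

section
/- Let d ≥ 2, let X be an ℝ^d-valued random vector whose law is absolutely continuous with respect to Lebesgue measure and whose support is all of ℝ^d, let γ ∈ (0,1), let M_γ = (1−γ)·inf over unit vectors u of P(⟨u, X⟩ ≥ ‖X‖·√(1−γ²)), and let α ∈ (0,1) satisfy 1 − M_γ/(d+1) < α² < 1. Then every x ∈ ℝ^d with HD(x|X) ≥ (1−α²)/M_γ is a geometric quantile of order at most α: there exist β ∈ [0,α] and a unit vector u ∈ ℝ^d such that x minimizes q ↦ f_{βu}(q) = E[‖X−q‖ − ‖X‖] − β⟨u,q⟩ over ℝ^d. -/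
/-!
Put `W = (X - x) / ‖X - x‖` (with `W = 0` where `X = x`) and `S = E W`. Convexity of the norm
makes `-S` a subgradient at `x` of `q ↦ E[‖X - q‖ - ‖X‖]`, so `x` is a geometric quantile with
`β u = -S`, and it suffices to show `‖S‖ ≤ α`.

Choose a unit vector `u` with `x = -t u` and `t ≥ 0`. The cone
`C = {y | ⟪u, y⟫ ≥ ‖y‖ √(1 - γ²)}` is convex and contains `u`, hence `X ∈ C` implies
`X - x = X + t u ∈ C`. A vector of `C` and a vector of the opposite halfspace `{z | ⟪u, z⟫ ≤ 0}`
make an angle of cosine at most `γ` (`inner_le_of_cone_of_halfspace`). Therefore `⟪W, W'⟫ ≤ γ`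
whenever `W` comes from `X ∈ C` and `W'` from `X - x` in the halfspace. Since `‖S‖²` is the
mean of `⟪W, W'⟫` over independent copies,
`1 - ‖S‖² ≥ (1 - γ) P(X ∈ C) P(⟪-u, X - x⟫ ≥ 0) ≥ M_γ · HD(x) ≥ 1 - α²`
(`norm_sq_integral_le`).
-/

open MeasureTheory
open scoped RealInnerProductSpace ProbabilityTheory

/-- Halfspace (Tukey) depth of `x` with respect to `X`:
`HD(x|X) = inf` over unit vectors `v` of `P(⟨v, X − x⟩ ≥ 0)`. -/
noncomputable def halfspaceDepth {d : ℕ} {Ω : Type*} [MeasureSpace Ω]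
    (X : Ω → EuclideanSpace ℝ (Fin d)) (x : EuclideanSpace ℝ (Fin d)) : ℝ :=
  ⨅ v : Metric.sphere (0 : EuclideanSpace ℝ (Fin d)) 1,
    (ℙ {ω | 0 ≤ ⟪(v : EuclideanSpace ℝ (Fin d)), X ω - x⟫}).toReal

/-- A vector within angle `arcsin γ` of `u` and a vector at angle at least `π / 2` from `u` have
angle of cosine at most `γ`. -/
lemma inner_le_of_cone_of_halfspace {E : Type*} [NormedAddCommGroup E] [InnerProductSpace ℝ E]
    {u w z : E} {γ : ℝ} (hγ0 : 0 ≤ γ) (hγ1 : γ ≤ 1) (hu : ‖u‖ = 1)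
    (hw : ‖w‖ * Real.sqrt (1 - γ ^ 2) ≤ ⟪u, w⟫) (hz : ⟪u, z⟫ ≤ 0) :
    ⟪w, z⟫ ≤ γ * (‖w‖ * ‖z‖) := by
  have hc : Real.sqrt (1 - γ ^ 2) ^ 2 = 1 - γ ^ 2 := Real.sq_sqrt (by nlinarith)
  have h0 : 0 ≤ ‖w‖ * Real.sqrt (1 - γ ^ 2) := by positivity
  set a := ⟪u, w⟫ with ha
  have hperp : ‖w - a • u‖ ≤ γ * ‖w‖ := by
    refine abs_le_of_sq_le_sq' ?_ (by positivity) |>.2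
    have h1 : ‖w - a • u‖ ^ 2 = ‖w‖ ^ 2 - a ^ 2 := by
      rw [norm_sub_sq_real, real_inner_smul_right, real_inner_comm, ← ha, norm_smul, hu,
        mul_one, Real.norm_eq_abs, sq_abs]
      ring
    have h2 : (‖w‖ * Real.sqrt (1 - γ ^ 2)) ^ 2 ≤ a ^ 2 := pow_le_pow_left₀ h0 hw 2
    rw [mul_pow, hc] at h2
    rw [h1]
    nlinarith
  have hdec : ⟪w, z⟫ = ⟪w - a • u, z⟫ + a * ⟪u, z⟫ := by
    rw [inner_sub_left, real_inner_smul_left]; ring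
  have h3 : ⟪w - a • u, z⟫ ≤ γ * ‖w‖ * ‖z‖ :=
    (real_inner_le_norm _ _).trans (mul_le_mul_of_nonneg_right hperp (norm_nonneg _))
  have h4 : a * ⟪u, z⟫ ≤ 0 := mul_nonpos_of_nonneg_of_nonpos (h0.trans hw) hz
  linarith

/-- A mean of a function at most `1`, and at most `c` on `A`. -/
lemma integral_le_of_le_on {Ω : Type*} [MeasurableSpace Ω] {P : Measure Ω}
    [IsProbabilityMeasure P] {f : Ω → ℝ} (hf : Integrable f P) {A : Set Ω}
    (hA : MeasurableSet A) {c : ℝ} (h1 : ∀ ω, f ω ≤ 1) (hc : ∀ ω ∈ A, f ω ≤ c) :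
    ∫ ω, f ω ∂P ≤ 1 - (1 - c) * P.real A := by
  have hi : Integrable (A.indicator fun _ : Ω => 1 - c) P :=
    (integrable_const _).indicator hA
  have h : ∫ ω, f ω ∂P ≤ ∫ ω, (1 - A.indicator (fun _ => 1 - c) ω) ∂P := by
    refine integral_mono hf ((integrable_const _).sub hi) fun ω => ?_
    by_cases hω : ω ∈ A
    · simpa [hω] using hc ω hω
    · simpa [hω] using h1 ω
  rw [integral_sub (integrable_const _) hi, integral_indicator_const _ hA] at h
  simpa [mul_comm] using h

/-- If `W` has norm at most `1` and `⟪W ω, W ω'⟫ ≤ γ` for `ω ∈ A`, `ω' ∈ B`, then the mean of `W`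
is bounded away from the unit sphere. -/
lemma norm_sq_integral_le {E : Type*} [NormedAddCommGroup E] [InnerProductSpace ℝ E]
    [CompleteSpace E] {Ω : Type*} [MeasurableSpace Ω] {P : Measure Ω}
    [IsProbabilityMeasure P] {W : Ω → E} (hW : Integrable W P) (hW1 : ∀ ω, ‖W ω‖ ≤ 1)
    {A B : Set Ω} (hA : MeasurableSet A) (hB : MeasurableSet B) {γ : ℝ}
    (hAB : ∀ ω ∈ A, ∀ ω' ∈ B, ⟪W ω, W ω'⟫ ≤ γ) :
    ‖∫ ω, W ω ∂P‖ ^ 2 ≤ 1 - (1 - γ) * P.real A * P.real B := by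
  have hone : ∀ a b : E, ‖a‖ ≤ 1 → ‖b‖ ≤ 1 → ⟪a, b⟫ ≤ 1 := fun a b ha hb =>
    (real_inner_le_norm a b).trans (mul_le_one₀ ha (norm_nonneg _) hb)
  set S := ∫ ω, W ω ∂P with hS
  have hS1 : ‖S‖ ≤ 1 := by
    simpa using norm_integral_le_of_norm_le_const (μ := P) (f := W) (C := 1)
      (Filter.Eventually.of_forall hW1)
  have hin : ∀ c : E, ∫ ω, ⟪c, W ω⟫ ∂P = ⟪c, S⟫ := fun c => integral_inner hW c
  have hSA : ∀ ω ∈ A, ⟪S, W ω⟫ ≤ 1 - (1 - γ) * P.real B := fun ω hω => by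
    rw [real_inner_comm, ← hin]
    exact integral_le_of_le_on (hW.const_inner _) hB
      (fun ω' => hone _ _ (hW1 _) (hW1 _)) (hAB ω hω)
  have := integral_le_of_le_on (hW.const_inner S) hA (fun ω => hone _ _ hS1 (hW1 ω)) hSA
  rw [hin, real_inner_self_eq_norm_sq] at this
  linarith

/-- Subgradient inequality of the norm, with subgradient `0` at the origin (via `0⁻¹ = 0`). -/
lemma inner_unit_le_norm_sub {E : Type*} [NormedAddCommGroup E] [InnerProductSpace ℝ E]
    (y h : E) : ⟪‖y‖⁻¹ • y, h⟫ ≤ ‖y + h‖ - ‖y‖ := by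
  rcases eq_or_ne y 0 with rfl | hy
  · simp
  have hn : ‖y‖ ≠ 0 := norm_ne_zero_iff.2 hy
  have h1 := real_inner_le_norm (‖y‖⁻¹ • y) (y + h)
  rw [norm_smul, norm_inv, norm_norm, inv_mul_cancel₀ hn, one_mul, inner_add_right,
    real_inner_smul_left _ y, real_inner_self_eq_norm_sq, pow_two, inv_mul_cancel_left₀ hn] at h1
  linarith

/-- Theorem (lower bound inclusion): for a fully supported absolutely continuous `X`
on `ℝ^d` (`d ≥ 2`), `γ ∈ (0,1)`, and `α ∈ (0,1)` with `1 − M_γ/(d+1) < α² < 1`,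
every point `x` with `HD(x|X) ≥ (1−α²)/M_γ` is a geometric quantile `q_X(βu)` for
some `β ∈ [0,α]` and some unit vector `u`. -/
theorem depth_region_subset_geometric_quantile_region
    {d : ℕ} (hd : 2 ≤ d)
    {Ω : Type*} [MeasureSpace Ω] [IsProbabilityMeasure (ℙ : Measure Ω)]
    (X : Ω → EuclideanSpace ℝ (Fin d)) (hX : Measurable X)
    (habs : Measure.map X ℙ ≪ (volume : Measure (EuclideanSpace ℝ (Fin d))))
    (hsupp : (Measure.map X ℙ).IsOpenPosMeasure)
    (γ : ℝ) (hγ : γ ∈ Set.Ioo (0 : ℝ) 1)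
    (α : ℝ) (hα : α ∈ Set.Ioo (0 : ℝ) 1)
    (hα2 : 1 - Mgamma X γ / (d + 1) < α ^ 2)
    (x : EuclideanSpace ℝ (Fin d))
    (hdepth : (1 - α ^ 2) / Mgamma X γ ≤ halfspaceDepth X x) :
    ∃ β : ℝ, β ∈ Set.Icc (0 : ℝ) α ∧
      ∃ u : EuclideanSpace ℝ (Fin d), ‖u‖ = 1 ∧
        ∀ q : EuclideanSpace ℝ (Fin d), gqObj X β u x ≤ gqObj X β u q := by
  obtain ⟨hγ0, hγ1⟩ := hγ
  obtain ⟨hα0, hα1⟩ := hα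
  have : NeZero d := ⟨by omega⟩
  have : Nontrivial (EuclideanSpace ℝ (Fin d)) := inferInstance
  obtain ⟨e, he⟩ := exists_norm_eq (EuclideanSpace ℝ (Fin d)) zero_le_one
  -- A direction pointing from `x` to the origin, arbitrary when `x = 0`.
  obtain ⟨u, hu, t, ht, hxu⟩ : ∃ u : EuclideanSpace ℝ (Fin d), ‖u‖ = 1 ∧
      ∃ t : ℝ, 0 ≤ t ∧ x = -(t • u) := by
    rcases eq_or_ne x 0 with rfl | hx
    · exact ⟨e, he, 0, le_rfl, by simp⟩
    · have hn : ‖x‖ ≠ 0 := norm_ne_zero_iff.2 hx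
      refine ⟨-(‖x‖⁻¹ • x), ?_, ‖x‖, norm_nonneg _, ?_⟩
      · rw [norm_neg, norm_smul, norm_inv, norm_norm, inv_mul_cancel₀ hn]
      · rw [smul_neg, neg_neg, smul_smul, mul_inv_cancel₀ hn, one_smul]
  set W : Ω → EuclideanSpace ℝ (Fin d) := fun ω => ‖X ω - x‖⁻¹ • (X ω - x) with hWdef
  have hWm : Measurable W := by fun_prop
  have hW1 : ∀ ω, ‖W ω‖ ≤ 1 := fun ω => by
    simp only [hWdef, norm_smul, norm_inv, norm_norm]
    exact inv_mul_le_one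
  have hWi : Integrable W ℙ :=
    Integrable.of_bound hWm.aestronglyMeasurable 1 (Filter.Eventually.of_forall hW1)
  set A : Set Ω := {ω | ‖X ω‖ * Real.sqrt (1 - γ ^ 2) ≤ ⟪u, X ω⟫} with hA
  set B : Set Ω := {ω | 0 ≤ ⟪-u, X ω - x⟫} with hB
  have hAm : MeasurableSet A := measurableSet_le (by fun_prop) (by fun_prop)
  have hBm : MeasurableSet B := measurableSet_le (by fun_prop) (by fun_prop)
  have hc1 : Real.sqrt (1 - γ ^ 2) ≤ 1 := Real.sqrt_le_one.2 (by nlinarith)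
  have hAB : ∀ ω ∈ A, ∀ ω' ∈ B, ⟪W ω, W ω'⟫ ≤ γ := by
    intro ω hω ω' hω'
    simp only [hA, hB, Set.mem_ofPred_eq, inner_neg_left] at hω hω'
    have hcone : ‖X ω - x‖ * Real.sqrt (1 - γ ^ 2) ≤ ⟪u, X ω - x⟫ := by
      have h1 : ⟪u, X ω - x⟫ = ⟪u, X ω⟫ + t := by
        rw [hxu, sub_neg_eq_add, inner_add_right, real_inner_smul_right,
          real_inner_self_eq_norm_sq, hu]
        ring
      have h2 : ‖X ω - x‖ ≤ ‖X ω‖ + t := by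
        have h3 : ‖x‖ = t := by
          rw [hxu, norm_neg, norm_smul, hu, mul_one, Real.norm_of_nonneg ht]
        simpa [h3] using norm_sub_le (X ω) x
      have h4 := mul_le_mul_of_nonneg_right h2 (Real.sqrt_nonneg (1 - γ ^ 2))
      have h5 := mul_le_mul_of_nonneg_left hc1 ht
      rw [h1]
      linarith
    have h6 : ‖W ω‖ * Real.sqrt (1 - γ ^ 2) ≤ ⟪u, W ω⟫ := by
      simp only [hWdef, norm_smul, norm_inv, norm_norm, real_inner_smul_right]
      rw [mul_assoc]
      exact mul_le_mul_of_nonneg_left hcone (by positivity)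
    have h7 : ⟪u, W ω'⟫ ≤ 0 := by
      simp only [hWdef, real_inner_smul_right]
      exact mul_nonpos_of_nonneg_of_nonpos (by positivity) (by linarith)
    refine (inner_le_of_cone_of_halfspace hγ0.le hγ1.le hu h6 h7).trans ?_
    exact mul_le_of_le_one_right hγ0.le (mul_le_one₀ (hW1 _) (norm_nonneg _) (hW1 _))
  have hR := norm_sq_integral_le hWi hW1 hAm hBm hAB
  set S := ∫ ω, W ω with hS
  have hMA : Mgamma X γ ≤ (1 - γ) * (ℙ : Measure Ω).real A := by
    refine mul_le_mul_of_nonneg_left ?_ (by linarith)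
    exact ciInf_le (f := fun u : Metric.sphere (0 : EuclideanSpace ℝ (Fin d)) 1 =>
        (ℙ {ω | ‖X ω‖ * Real.sqrt (1 - γ ^ 2) ≤
          ⟪(u : EuclideanSpace ℝ (Fin d)), X ω⟫}).toReal)
      ⟨0, by rintro _ ⟨_, rfl⟩; exact ENNReal.toReal_nonneg⟩ ⟨u, by simp [hu]⟩
  have hDB : halfspaceDepth X x ≤ (ℙ : Measure Ω).real B :=
    ciInf_le (f := fun v : Metric.sphere (0 : EuclideanSpace ℝ (Fin d)) 1 =>
        (ℙ {ω | 0 ≤ ⟪(v : EuclideanSpace ℝ (Fin d)), X ω - x⟫}).toReal)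
      ⟨0, by rintro _ ⟨_, rfl⟩; exact ENNReal.toReal_nonneg⟩ ⟨-u, by simp [hu]⟩
  -- The lower bound on `α²` excludes `M_γ ≤ 0`, so the quotient in `hdepth` is a genuine one.
  have hM : 0 < Mgamma X γ := by
    by_contra! h
    have h1 : Mgamma X γ / (d + 1) ≤ 0 := div_nonpos_of_nonpos_of_nonneg h (by positivity)
    nlinarith
  have hSα : ‖S‖ ≤ α := by
    refine abs_le_of_sq_le_sq' ?_ hα0.le |>.2
    have h1 : 1 - α ^ 2 ≤ (ℙ : Measure Ω).real B * Mgamma X γ :=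
      (div_le_iff₀ hM).1 (hdepth.trans hDB)
    have h2 := mul_le_mul_of_nonneg_left hMA (measureReal_nonneg (μ := (ℙ : Measure Ω)) (s := B))
    linarith
  obtain ⟨v, hv, hSv⟩ : ∃ v : EuclideanSpace ℝ (Fin d), ‖v‖ = 1 ∧ ‖S‖ • v = -S := by
    rcases eq_or_ne S 0 with h | h
    · exact ⟨e, he, by simp [h]⟩
    · have hn : ‖S‖ ≠ 0 := norm_ne_zero_iff.2 h
      refine ⟨-(‖S‖⁻¹ • S), ?_, ?_⟩
      · rw [norm_neg, norm_smul, norm_inv, norm_norm, inv_mul_cancel₀ hn]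
      · rw [smul_neg, smul_smul, mul_inv_cancel₀ hn, one_smul]
  refine ⟨‖S‖, ⟨norm_nonneg _, hSα⟩, v, hv, fun q => ?_⟩
  have hint : ∀ q : EuclideanSpace ℝ (Fin d), Integrable (fun ω => ‖X ω - q‖ - ‖X ω‖) ℙ :=
    fun q => Integrable.of_bound (by fun_prop) ‖q‖ (Filter.Eventually.of_forall fun ω => by
      simpa using abs_norm_sub_norm_le (X ω - q) (X ω))
  have hsub : ⟪x - q, S⟫ ≤ (∫ ω, (‖X ω - q‖ - ‖X ω‖)) - ∫ ω, (‖X ω - x‖ - ‖X ω‖) := by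
    rw [← integral_sub (hint q) (hint x), hS, ← integral_inner hWi]
    refine integral_mono (hWi.const_inner _) ((hint q).sub (hint x)) fun ω => ?_
    have h := inner_unit_le_norm_sub (X ω - x) (x - q)
    rw [sub_add_sub_cancel, real_inner_comm] at h
    linarith
  have hlin : ∀ p : EuclideanSpace ℝ (Fin d), ‖S‖ * ⟪v, p⟫ = -⟪p, S⟫ := fun p => by
    rw [← real_inner_smul_left, hSv, inner_neg_left, real_inner_comm]
  simp only [gqObj, hlin]
  rw [inner_sub_left] at hsub
  linarith
end

section
/- Let d ≥ 2, let X be an ℝ^d-valued random vector whose law is absolutely continuous with respect to Lebesgue measure and whose support is all of ℝ^d, let γ ∈ (0,1), let M_γ = (1−γ)·inf over unit vectors u of P(⟨u, X⟩ ≥ ‖X‖·√(1−γ²)), and let α ∈ (0,1) satisfy 1 − M_γ/(d+1) < α² < 1. Let θ ∈ ℝ^d be a point of maximal halfspace depth, i.e. HD(θ|X) = sup_{x ∈ ℝ^d} HD(x|X). Then for every unit vector u ∈ ℝ^d and every geometric quantile q₀ = q_X(αu) (minimizer of f_{αu}), one has ‖q₀ − θ‖ ≥ inf over unit vectors v ∈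 ℝ^d of |Q_{v^⊤X}(1 − (1−α²)/M_γ) − ⟨v, θ⟩|. -/
/-!
Write `S = (q₀ - X) / ‖q₀ - X‖`. Since the law of `X` has no atoms, the objective is differentiable
at its minimizer `q₀`, and the first-order condition reads `E S = α u` (`integral_unitDir`). Hence
`1 - α² = E[1 - ⟪S, α u⟫]`, and for an independent copy `S'` of `S` this equals `E[1 - ⟪S, S'⟫]`.

Let `v` be a unit vector with `q₀ ∈ ℝ₊ v`. If `X` lies in the halfspace `⟪v, X - q₀⟫ ≥ 0`, then
`⟪S, q₀⟫ ≤ 0`, so `⟪S, S'⟫ ≤ 0` as soon as the copy `X'` lies in the cone of axis `S` that occurs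
in the definition of `M_γ`. Since `1 - ⟪S, S'⟫ ≥ 0` always, this gives
`P(⟪v, X - q₀⟫ ≥ 0) ≤ (1 - γ)(1 - α²) / M_γ` (`halfspace_mul_iInf_cone_le`), which is strictly
below the level `c = (1 - α²) / M_γ`.

On the other hand a halfspace median `θ` has depth at least `1 / (d + 1) > c`, by the centerpoint
theorem (`exists_centerpoint`), a consequence of Helly's theorem. So the quantile of `⟪v, X⟫` of
order `1 - c` lies between `⟪v, θ⟫` and `⟪v, q₀⟫`, and its distance to `⟪v, θ⟫` is at most
`⟪v, q₀ - θ⟫ ≤ ‖q₀ - θ‖`.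
-/

open MeasureTheory
open scoped RealInnerProductSpace ProbabilityTheory

/-- The univariate quantile function of the projection `⟨v,X⟩`:
`Q_{v^⊤X}(β) = inf {t : P(⟨v,X⟩ > t) < 1 − β}`. -/
noncomputable def dirQuantile {d : ℕ} {Ω : Type*} [MeasureSpace Ω]
    (X : Ω → EuclideanSpace ℝ (Fin d)) (v : EuclideanSpace ℝ (Fin d)) (β : ℝ) : ℝ :=
  sInf {t : ℝ | (ℙ {ω | t < ⟪v, X ω⟫}).toReal < 1 - β}

/-! ### Direction vectors and the derivative of the norm -/

/-- The unit vector pointing from `x` to `q`; it is `0` when `x = q`. -/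
noncomputable def unitDir {d : ℕ} (q x : EuclideanSpace ℝ (Fin d)) : EuclideanSpace ℝ (Fin d) :=
  ‖q - x‖⁻¹ • (q - x)

lemma norm_unitDir_le {d : ℕ} (q x : EuclideanSpace ℝ (Fin d)) : ‖unitDir q x‖ ≤ 1 := by
  unfold unitDir
  rw [norm_smul, norm_inv, norm_norm]
  exact inv_mul_le_one

lemma norm_unitDir {d : ℕ} {q x : EuclideanSpace ℝ (Fin d)} (h : x ≠ q) : ‖unitDir q x‖ = 1 := by
  unfold unitDir
  rw [norm_smul, norm_inv, norm_norm]
  exact inv_mul_cancel₀ (norm_ne_zero_iff.2 (sub_ne_zero.2 h.symm))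

lemma measurable_unitDir {d : ℕ} (q : EuclideanSpace ℝ (Fin d)) : Measurable (unitDir q) := by
  unfold unitDir
  fun_prop

lemma inner_unitDir_nonpos {d : ℕ} {q x w : EuclideanSpace ℝ (Fin d)} (h : ⟪w, q - x⟫ ≤ 0) :
    ⟪w, unitDir q x⟫ ≤ 0 := by
  unfold unitDir
  rw [real_inner_smul_right]
  exact mul_nonpos_of_nonneg_of_nonpos (by positivity) h

lemma hasFDerivAt_norm_const_sub {d : ℕ} {q x : EuclideanSpace ℝ (Fin d)} (h : x ≠ q) :
    HasFDerivAt (fun y => ‖x - y‖) (innerSL ℝ (unitDir q x)) q := by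
  have hn : ‖q - x‖ ≠ 0 := norm_ne_zero_iff.2 (sub_ne_zero.2 h.symm)
  have h1 : HasFDerivAt (fun y => y - x) (ContinuousLinearMap.id ℝ _) q :=
    (hasFDerivAt_id q).sub_const x
  have h2 := h1.norm_sq.sqrt (pow_ne_zero 2 hn)
  have h3 : (fun y => ‖x - y‖) = fun y => Real.sqrt (‖y - x‖ ^ 2) := by
    ext y
    rw [Real.sqrt_sq (norm_nonneg _), norm_sub_rev]
  rw [h3]
  refine h2.congr_fderiv ?_
  ext w
  simp only [unitDir, Real.sqrt_sq (norm_nonneg _)]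
  simp
  field_simp

/-! ### First-order condition and the halfspace estimate -/

section Probability

variable {d : ℕ} {Ω : Type*} [MeasureSpace Ω] [IsProbabilityMeasure (ℙ : Measure Ω)]
  {X : Ω → EuclideanSpace ℝ (Fin d)}

lemma integrable_unitDir (hX : Measurable X) (q : EuclideanSpace ℝ (Fin d)) :
    Integrable (fun ω => unitDir q (X ω)) (ℙ : Measure Ω) :=
  Integrable.of_bound ((measurable_unitDir q).comp hX).aestronglyMeasurable 1
    (Filter.Eventually.of_forall fun _ => norm_unitDir_le _ _)

/-- First-order condition for a minimizer of the objective. -/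
lemma integral_unitDir (hX : Measurable X) {α : ℝ} {u q₀ : EuclideanSpace ℝ (Fin d)}
    (hq : ∀ᵐ ω ∂(ℙ : Measure Ω), X ω ≠ q₀)
    (hmin : ∀ q : EuclideanSpace ℝ (Fin d), gqObj X α u q₀ ≤ gqObj X α u q) :
    ∫ ω, unitDir q₀ (X ω) = α • u := by
  have hF_meas (q : EuclideanSpace ℝ (Fin d)) :
      AEStronglyMeasurable (fun ω => ‖X ω - q‖ - ‖X ω‖) (ℙ : Measure Ω) := by
    apply Measurable.aestronglyMeasurable
    fun_prop
  have hF'_meas : AEStronglyMeasurable (fun ω => innerSL ℝ (unitDir q₀ (X ω))) (ℙ : Measure Ω) :=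
    (innerSL ℝ).continuous.comp_aestronglyMeasurable
      (integrable_unitDir hX q₀).aestronglyMeasurable
  have key := hasFDerivAt_integral_of_dominated_loc_of_lip' (μ := (ℙ : Measure Ω)) (𝕜 := ℝ)
    (F := fun q ω => ‖X ω - q‖ - ‖X ω‖) (x₀ := q₀) (bound := fun _ => (1 : ℝ))
    (F' := fun ω => innerSL ℝ (unitDir q₀ (X ω))) (s := Set.univ) Filter.univ_mem
    (fun q _ => hF_meas q)
    (Integrable.of_bound (hF_meas q₀) ‖q₀‖ (Filter.Eventually.of_forall fun ω => by
      have := abs_norm_sub_norm_le (X ω - q₀) (X ω)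
      simpa using this))
    hF'_meas
    (Filter.Eventually.of_forall fun ω q _ => by
      have := abs_norm_sub_norm_le (X ω - q) (X ω - q₀)
      rw [sub_sub_sub_cancel_left, norm_sub_rev q₀ q] at this
      simpa using this)
    (integrable_const _)
    (hq.mono fun ω hω => (hasFDerivAt_norm_const_sub hω).sub_const _)
  obtain ⟨hint, hder⟩ := key
  have hobj : HasFDerivAt (gqObj X α u)
      ((∫ ω, innerSL ℝ (unitDir q₀ (X ω))) - α • innerSL ℝ u) q₀ :=
    hder.sub (((innerSL ℝ u).hasFDerivAt).const_mul α)
  have h0 := IsLocalMin.hasFDerivAt_eq_zero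
    (Filter.Eventually.of_forall hmin : IsLocalMin (gqObj X α u) q₀) hobj
  refine ext_inner_left ℝ fun w => ?_
  have h1 := congrArg (fun L => L w) h0
  simp only [sub_apply, ContinuousLinearMap.integral_apply hint,
    smul_apply, innerSL_apply_apply, zero_apply,
    smul_eq_mul] at h1
  rw [← integral_inner (integrable_unitDir hX q₀), real_inner_smul_right, real_inner_comm u w]
  simp only [real_inner_comm _ w] at h1 ⊢
  linarith

/-- Markov's inequality, for a constant `k` of arbitrary sign. -/
lemma mul_measureReal_le_integral {f : Ω → ℝ} (hf : Integrable f (ℙ : Measure Ω))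
    (hf0 : ∀ ω, 0 ≤ f ω) {A : Set Ω} (hA : MeasurableSet A) {k : ℝ} (hk : ∀ ω ∈ A, k ≤ f ω) :
    k * (ℙ : Measure Ω).real A ≤ ∫ ω, f ω := by
  have h1 : ∫ ω, A.indicator (fun _ => k) ω = k * (ℙ : Measure Ω).real A := by
    rw [integral_indicator_const _ hA, smul_eq_mul, mul_comm]
  rw [← h1]
  refine integral_mono ((integrable_const k).indicator hA) hf fun ω => ?_
  by_cases hω : ω ∈ A
  · simpa [hω] using hk ω hω
  · simpa [hω] using hf0 ω

/-- The main estimate: the upper halfspace at `q₀` in the direction of `q₀` has small mass, because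
a sample point in it is at a nonacute angle, seen from `q₀`, with a whole cone of points. -/
lemma halfspace_mul_iInf_cone_le (hX : Measurable X) {γ α : ℝ}
    {u q₀ v : EuclideanSpace ℝ (Fin d)} (hu : ‖u‖ = 1)
    (hS : ∫ ω, unitDir q₀ (X ω) = α • u) {r : ℝ} (hr : 0 ≤ r) (hqv : q₀ = r • v) :
    (⨅ w : Metric.sphere (0 : EuclideanSpace ℝ (Fin d)) 1,
      (ℙ {ω | ‖X ω‖ * Real.sqrt (1 - γ ^ 2) ≤
        ⟪(w : EuclideanSpace ℝ (Fin d)), X ω⟫}).toReal) *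
      (ℙ : Measure Ω).real {ω | ⟪v, q₀⟫ ≤ ⟪v, X ω⟫} ≤ 1 - α ^ 2 := by
  have hSi := integrable_unitDir hX q₀ (Ω := Ω)
  have hint (s : EuclideanSpace ℝ (Fin d)) :
      Integrable (fun ω => 1 - ⟪s, unitDir q₀ (X ω)⟫) (ℙ : Measure Ω) :=
    (integrable_const 1).sub (hSi.const_inner s)
  have heq (s : EuclideanSpace ℝ (Fin d)) :
      ∫ ω, (1 - ⟪s, unitDir q₀ (X ω)⟫) = 1 - ⟪s, α • u⟫ := by
    rw [integral_sub (integrable_const 1) (hSi.const_inner s), integral_inner hSi, hS]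
    simp
  have hnn {s : EuclideanSpace ℝ (Fin d)} (hs : ‖s‖ ≤ 1) (ω : Ω) :
      0 ≤ 1 - ⟪s, unitDir q₀ (X ω)⟫ := by
    have h1 := real_inner_le_norm s (unitDir q₀ (X ω))
    have h2 := mul_le_one₀ hs (norm_nonneg _) (norm_unitDir_le q₀ (X ω))
    linarith
  have hau : ‖α • u‖ ≤ 1 := by
    rw [← hS]
    refine (norm_integral_le_of_norm_le_const (C := 1)
      (Filter.Eventually.of_forall fun ω => norm_unitDir_le q₀ (X ω))).trans ?_
    simp
  have hfin : ∫ ω, (1 - ⟪α • u, unitDir q₀ (X ω)⟫) = 1 - α ^ 2 := by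
    rw [heq, real_inner_self_eq_norm_sq, norm_smul, hu, mul_one, Real.norm_eq_abs, sq_abs]
  rw [← hfin]
  refine mul_measureReal_le_integral (hint _) (hnn hau)
    (measurableSet_le (by fun_prop) (by fun_prop)) fun ω hω => ?_
  have hbdd : BddBelow (Set.range fun w : Metric.sphere (0 : EuclideanSpace ℝ (Fin d)) 1 =>
      (ℙ {ω | ‖X ω‖ * Real.sqrt (1 - γ ^ 2) ≤
        ⟪(w : EuclideanSpace ℝ (Fin d)), X ω⟫}).toReal) :=
    ⟨0, by rintro _ ⟨w, rfl⟩; positivity⟩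
  -- Rewrite `1 - ⟪S, α • u⟫` as an average over an independent copy of `X`.
  rw [real_inner_comm, ← heq]
  -- When `X ω = q₀` the direction is the junk value `0`, the integral is `1`, and any cone will do.
  by_cases hx : X ω = q₀
  · refine (ciInf_le hbdd ⟨u, by simpa using hu⟩).trans ?_
    simp only [hx, unitDir, sub_self, smul_zero, inner_zero_left, sub_zero]
    simpa [measureReal_def] using measureReal_le_one (μ := (ℙ : Measure Ω))
  · refine (ciInf_le hbdd ⟨unitDir q₀ (X ω), by simpa using norm_unitDir hx⟩).trans ?_
    rw [← one_mul (ENNReal.toReal _)]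
    refine mul_measureReal_le_integral (hint _) (hnn (norm_unitDir_le _ _))
      (measurableSet_le (by fun_prop) (by fun_prop)) fun ω' hω' => ?_
    have h1 : 0 ≤ ⟪unitDir q₀ (X ω), X ω'⟫ := le_trans (by positivity) hω'
    have h2 : ⟪unitDir q₀ (X ω), q₀⟫ ≤ 0 := by
      have h3 : ⟪v, unitDir q₀ (X ω)⟫ ≤ 0 :=
        inner_unitDir_nonpos (by rw [inner_sub_right]; exact sub_nonpos.2 hω)
      calc ⟪unitDir q₀ (X ω), q₀⟫ = r * ⟪v, unitDir q₀ (X ω)⟫ := by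
            nth_rw 2 [hqv]
            rw [real_inner_smul_right, real_inner_comm]
        _ ≤ 0 := mul_nonpos_of_nonneg_of_nonpos hr h3
    have h4 : ⟪unitDir q₀ (X ω), unitDir q₀ (X ω')⟫ ≤ 0 :=
      inner_unitDir_nonpos (by rw [inner_sub_right]; linarith)
    linarith

/-! ### Depth of a halfspace median -/

/-- Centerpoint theorem: some point has halfspace depth at least `1 / (d + 1)`. It is obtained by
applying Helly's theorem to the compact convex sets of mass greater than `d / (d + 1)`. -/
lemma exists_centerpoint (hX : Measurable X) :
    ∃ x : EuclideanSpace ℝ (Fin d), ∀ v : EuclideanSpace ℝ (Fin d),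
      1 / ((d : ℝ) + 1) ≤ (ℙ : Measure Ω).real {ω | 0 ≤ ⟪v, X ω - x⟫} := by
  let ι := {C : Set (EuclideanSpace ℝ (Fin d)) // Convex ℝ C ∧ IsCompact C ∧
    (ℙ : Measure Ω).real {ω | X ω ∉ C} < 1 / ((d : ℝ) + 1)}
  have hd : (0 : ℝ) < (d : ℝ) + 1 := by positivity
  obtain ⟨x, hx⟩ : (⋂ i : ι, (i : Set (EuclideanSpace ℝ (Fin d)))).Nonempty := by
    refine Convex.helly_theorem_compact' (𝕜 := ℝ) (fun i => i.2.1) (fun i => i.2.2.1)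
      fun I hI => ?_
    by_contra hne
    rw [Set.not_nonempty_iff_eq_empty] at hne
    rw [finrank_euclideanSpace_fin] at hI
    have hcov : (Set.univ : Set Ω) ⊆ ⋃ i ∈ I, {ω | X ω ∉ (i : Set _)} := by
      intro ω _
      have : X ω ∉ ⋂ i ∈ I, (i : Set (EuclideanSpace ℝ (Fin d))) := by simp [hne]
      simpa using this
    have h1 : 1 ≤ ∑ i ∈ I, (ℙ : Measure Ω).real {ω | X ω ∉ (i : Set _)} := by
      refine le_trans ?_ (measureReal_biUnion_finset_le I _)
      exact (probReal_univ (μ := (ℙ : Measure Ω))).symm.le.trans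
        (measureReal_mono hcov (measure_ne_top _ _))
    have hIne : I.Nonempty := by
      rw [Finset.nonempty_iff_ne_empty]
      rintro rfl
      norm_num at h1
    have h2 : ∑ i ∈ I, (ℙ : Measure Ω).real {ω | X ω ∉ (i : Set _)} <
        ∑ _i ∈ I, 1 / ((d : ℝ) + 1) := Finset.sum_lt_sum_of_nonempty hIne fun i _ => i.2.2.2
    have h3 : (I.card : ℝ) ≤ (d : ℝ) + 1 := by exact_mod_cast hI
    rw [Finset.sum_const, nsmul_eq_mul, mul_one_div] at h2
    have h4 : (I.card : ℝ) / ((d : ℝ) + 1) ≤ 1 := (div_le_one hd).2 h3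
    linarith
  refine ⟨x, fun v => ?_⟩
  by_contra! hlt
  -- Exhaust the open halfspace opposite to `v` by compact convex sets avoiding `x`.
  let C (n : ℕ) : Set (EuclideanSpace ℝ (Fin d)) :=
    Metric.closedBall 0 n ∩ {y | ⟪v, y⟫ ≤ ⟪v, x⟫ - 1 / ((n : ℝ) + 1)}
  have hconv (n : ℕ) : Convex ℝ (C n) :=
    (convex_closedBall _ _).inter (convex_halfSpace_le (innerSL ℝ v).isLinear _)
  have hcomp (n : ℕ) : IsCompact (C n) :=
    (isCompact_closedBall _ _).inter_right (isClosed_le (by fun_prop) (by fun_prop))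
  have hxC (n : ℕ) : x ∉ C n := by
    rintro ⟨-, h⟩
    have : 0 < 1 / ((n : ℝ) + 1) := by positivity
    simp only [Set.mem_ofPred_eq] at h
    linarith
  have hmeas (n : ℕ) : MeasurableSet {ω | X ω ∉ C n} := hX (hcomp n).measurableSet.compl
  have hanti : Antitone fun n => {ω | X ω ∉ C n} := by
    intro m n hmn ω hω hm
    have hmn' : (m : ℝ) ≤ n := by exact_mod_cast hmn
    refine hω ⟨Metric.closedBall_subset_closedBall hmn' hm.1, ?_⟩
    have h1 := hm.2
    have h2 : 1 / ((n : ℝ) + 1) ≤ 1 / ((m : ℝ) + 1) := by gcongr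
    simp only [Set.mem_ofPred_eq] at h1 ⊢
    linarith
  have hinter : ⋂ n, {ω | X ω ∉ C n} = {ω | 0 ≤ ⟪v, X ω - x⟫} := by
    ext ω
    simp only [Set.mem_iInter, Set.mem_ofPred_eq, inner_sub_right]
    constructor
    · intro h
      by_contra! hneg
      obtain ⟨n₁, hn₁⟩ := exists_nat_one_div_lt (show 0 < ⟪v, x⟫ - ⟪v, X ω⟫ by linarith)
      obtain ⟨n₂, hn₂⟩ := exists_nat_ge ‖X ω‖
      refine h (max n₁ n₂) ⟨?_, ?_⟩
      · rw [mem_closedBall_zero_iff]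
        exact hn₂.trans (by exact_mod_cast le_max_right _ _)
      · have h2 : 1 / (((max n₁ n₂ : ℕ) : ℝ) + 1) ≤ 1 / ((n₁ : ℝ) + 1) := by
          gcongr
          exact le_max_left _ _
        simp only [Set.mem_ofPred_eq]
        linarith
    · rintro h n ⟨-, hn⟩
      have : 0 < 1 / ((n : ℝ) + 1) := by positivity
      simp only [Set.mem_ofPred_eq] at hn
      linarith
  have htend : Filter.Tendsto (fun n => (ℙ : Measure Ω).real {ω | X ω ∉ C n}) Filter.atTop
      (nhds ((ℙ : Measure Ω).real {ω | 0 ≤ ⟪v, X ω - x⟫})) := by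
    rw [← hinter]
    exact (ENNReal.tendsto_toReal (measure_ne_top _ _)).comp
      (tendsto_measure_iInter_atTop (fun n => (hmeas n).nullMeasurableSet) hanti
        ⟨0, measure_ne_top _ _⟩)
  obtain ⟨n, hn⟩ := (htend.eventually_lt_const hlt).exists
  exact hxC n (Set.mem_iInter.1 hx ⟨C n, hconv n, hcomp n, hn⟩)

lemma halfspaceDepth_le {d : ℕ} {Ω : Type*} [MeasureSpace Ω]
    {X : Ω → EuclideanSpace ℝ (Fin d)} (x : EuclideanSpace ℝ (Fin d)) {v : EuclideanSpace ℝ (Fin d)}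
    (hv : ‖v‖ = 1) :
    halfspaceDepth X x ≤ (ℙ : Measure Ω).real {ω | 0 ≤ ⟪v, X ω - x⟫} :=
  ciInf_le (f := fun v : Metric.sphere (0 : EuclideanSpace ℝ (Fin d)) 1 =>
      (ℙ {ω | 0 ≤ ⟪(v : EuclideanSpace ℝ (Fin d)), X ω - x⟫}).toReal)
    ⟨0, by rintro _ ⟨w, rfl⟩; positivity⟩ ⟨v, by simpa using hv⟩

lemma one_div_le_depth_median (hX : Measurable X) {θ u : EuclideanSpace ℝ (Fin d)}
    (hθ : halfspaceDepth X θ = ⨆ x : EuclideanSpace ℝ (Fin d), halfspaceDepth X x)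
    (hu : ‖u‖ = 1) : 1 / ((d : ℝ) + 1) ≤ halfspaceDepth X θ := by
  obtain ⟨x, hx⟩ := exists_centerpoint hX
  have : Nonempty (Metric.sphere (0 : EuclideanSpace ℝ (Fin d)) 1) := ⟨⟨u, by simpa using hu⟩⟩
  rw [hθ]
  have hle : 1 / ((d : ℝ) + 1) ≤ halfspaceDepth X x := le_ciInf fun v => hx v
  refine hle.trans (le_ciSup (f := halfspaceDepth X) ⟨1, ?_⟩ x)
  rintro _ ⟨y, rfl⟩
  exact (halfspaceDepth_le y hu).trans measureReal_le_one

end Probability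

/-! ### The lower bound -/

/-- Theorem (lower bound via univariate quantiles): with `θ` a halfspace median, for
every unit `u` and every geometric quantile `q₀ = q_X(αu)`,
`‖q₀ − θ‖ ≥ inf` over unit `v` of `|Q_{v^⊤X}(1 − (1−α²)/M_γ) − ⟨v,θ⟩|`. -/
theorem geometric_quantile_lower_bound_univariate
    {d : ℕ} (hd : 2 ≤ d)
    {Ω : Type*} [MeasureSpace Ω] [IsProbabilityMeasure (ℙ : Measure Ω)]
    (X : Ω → EuclideanSpace ℝ (Fin d)) (hX : Measurable X)
    (habs : Measure.map X ℙ ≪ (volume : Measure (EuclideanSpace ℝ (Fin d))))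
    (hsupp : (Measure.map X ℙ).IsOpenPosMeasure)
    (γ : ℝ) (hγ : γ ∈ Set.Ioo (0 : ℝ) 1)
    (α : ℝ) (hα : α ∈ Set.Ioo (0 : ℝ) 1)
    (hα2 : 1 - Mgamma X γ / (d + 1) < α ^ 2)
    (θ : EuclideanSpace ℝ (Fin d))
    (hθ : halfspaceDepth X θ = ⨆ x : EuclideanSpace ℝ (Fin d), halfspaceDepth X x)
    (u : EuclideanSpace ℝ (Fin d)) (hu : ‖u‖ = 1)
    (q₀ : EuclideanSpace ℝ (Fin d))
    (hmin : ∀ q : EuclideanSpace ℝ (Fin d), gqObj X α u q₀ ≤ gqObj X α u q) :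
    (⨅ v : Metric.sphere (0 : EuclideanSpace ℝ (Fin d)) 1,
        |dirQuantile X (v : EuclideanSpace ℝ (Fin d)) (1 - (1 - α ^ 2) / Mgamma X γ)
          - ⟪(v : EuclideanSpace ℝ (Fin d)), θ⟫|) ≤ ‖q₀ - θ‖ := by
  obtain ⟨hγ0, hγ1⟩ := hγ
  obtain ⟨hα0, hα1⟩ := hα
  have hd1 : (0 : ℝ) < (d : ℝ) + 1 := by positivity
  have : Nonempty (Fin d) := ⟨⟨0, by omega⟩⟩
  have hα2' : 0 < 1 - α ^ 2 := by nlinarith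
  have hM : 0 < Mgamma X γ := by
    have h : 0 < Mgamma X γ / ((d : ℝ) + 1) := by linarith
    exact (div_pos_iff_of_pos_right hd1).1 h
  set c := (1 - α ^ 2) / Mgamma X γ with hc
  have hc0 : 0 < c := div_pos hα2' hM
  have hcd : c < 1 / ((d : ℝ) + 1) := by
    rw [hc, div_lt_div_iff₀ hM hd1, one_mul, ← lt_div_iff₀ hd1]
    linarith
  have hq : ∀ᵐ ω ∂(ℙ : Measure Ω), X ω ≠ q₀ := by
    have h1 : Measure.map X ℙ {q₀} = 0 := habs (measure_singleton q₀)
    rw [Measure.map_apply hX (measurableSet_singleton _)] at h1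
    rw [ae_iff]
    simpa [Set.preimage] using h1
  obtain ⟨v, r, hv, hr, hqv⟩ :
      ∃ (v : EuclideanSpace ℝ (Fin d)) (r : ℝ), ‖v‖ = 1 ∧ 0 ≤ r ∧ q₀ = r • v := by
    by_cases h0 : q₀ = 0
    · exact ⟨u, 0, hu, le_rfl, by simp [h0]⟩
    · have hn : ‖q₀‖ ≠ 0 := norm_ne_zero_iff.2 h0
      refine ⟨‖q₀‖⁻¹ • q₀, ‖q₀‖, ?_, norm_nonneg _, ?_⟩
      · rw [norm_smul, norm_inv, norm_norm, inv_mul_cancel₀ hn]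
      · rw [smul_smul, mul_inv_cancel₀ hn, one_smul]
  -- The factor `1 - γ < 1` in `Mgamma` makes the inequality strict, as `dirQuantile` requires.
  have hmass : (ℙ : Measure Ω).real {ω | ⟪v, q₀⟫ ≤ ⟪v, X ω⟫} < c := by
    have h1 := halfspace_mul_iInf_cone_le (γ := γ) hX hu (integral_unitDir hX hq hmin) hr hqv
    set k := ⨅ w : Metric.sphere (0 : EuclideanSpace ℝ (Fin d)) 1,
      (ℙ {ω | ‖X ω‖ * Real.sqrt (1 - γ ^ 2) ≤
        ⟪(w : EuclideanSpace ℝ (Fin d)), X ω⟫}).toReal with hk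
    have hMk : Mgamma X γ = (1 - γ) * k := rfl
    have hk0 : 0 < k := by
      rw [hMk] at hM
      exact (mul_pos_iff_of_pos_left (by linarith)).1 hM
    have h2 : Mgamma X γ < k := by rw [hMk]; nlinarith
    rw [mul_comm, ← le_div_iff₀ hk0] at h1
    exact h1.trans_lt (div_lt_div_of_pos_left hα2' hM h2)
  have hlow : ∀ t ∈ {t : ℝ | (ℙ {ω | t < ⟪v, X ω⟫}).toReal < 1 - (1 - c)}, ⟪v, θ⟫ ≤ t := by
    intro t ht
    by_contra! hlt
    have h1 := (one_div_le_depth_median hX hθ hu).trans (halfspaceDepth_le θ hv)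
    have h2 : (ℙ : Measure Ω).real {ω | 0 ≤ ⟪v, X ω - θ⟫} ≤
        (ℙ : Measure Ω).real {ω | t < ⟪v, X ω⟫} := by
      refine measureReal_mono fun ω hω => ?_
      simp only [Set.mem_ofPred_eq, inner_sub_right] at hω ⊢
      linarith
    simp only [Set.mem_ofPred_eq, ← measureReal_def] at ht
    linarith
  have hmem : ⟪v, q₀⟫ ∈ {t : ℝ | (ℙ {ω | t < ⟪v, X ω⟫}).toReal < 1 - (1 - c)} := by
    simp only [Set.mem_ofPred_eq, ← measureReal_def]
    have h1 : (ℙ : Measure Ω).real {ω | ⟪v, q₀⟫ < ⟪v, X ω⟫} ≤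
        (ℙ : Measure Ω).real {ω | ⟪v, q₀⟫ ≤ ⟪v, X ω⟫} :=
      measureReal_mono fun ω (hω : ⟪v, q₀⟫ < ⟪v, X ω⟫) => le_of_lt hω
    linarith
  have hQ1 : dirQuantile X v (1 - c) ≤ ⟪v, q₀⟫ := csInf_le ⟨_, hlow⟩ hmem
  have hQ2 : ⟪v, θ⟫ ≤ dirQuantile X v (1 - c) := le_csInf ⟨_, hmem⟩ hlow
  refine (ciInf_le ⟨0, by rintro _ ⟨w, rfl⟩; positivity⟩
    (⟨v, by simpa using hv⟩ : Metric.sphere (0 : EuclideanSpace ℝ (Fin d)) 1)).trans ?_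
  have h1 := real_inner_le_norm v (q₀ - θ)
  rw [hv, one_mul, inner_sub_right] at h1
  rw [abs_of_nonneg (sub_nonneg.2 hQ2)]
  linarith
end

section
/- Let d ≥ 2, let X be an ℝ^d-valued random vector whose law is absolutely continuous with respect to Lebesgue measure and whose support is all of ℝ^d, let θ ∈ ℝ^d be a point of maximal halfspace depth (HD(θ|X) = sup_{x} HD(x|X)), and let β ∈ (0, 1/(d+1)). Then the distance from θ to the depth contour at level β equals the minimal centered directional quantile at level 1−β: inf over x ∈ ℝ^d with HD(x|X) = β of ‖x − θ‖ = inf over unit vectors v ∈ ℝ^d of |Q_{v^⊤X}(1 − β) − ⟨v, θ⟩|. -/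
/-!
Write `μ` for the law of `X` and `G v x` for the mass of the closed halfspace with inner normal `v`
whose boundary passes through `x`. Absolute continuity makes hyperplanes null, so `G` is jointly
continuous for `v ≠ 0` (`continuousAt_halfspaceMass`); hence the depth is continuous and, by
compactness of the sphere, the infimum defining it is attained. Full support makes `G v x` strictly
decreasing in `⟪v, x⟫` (`halfspaceMass_strictAnti`), so `Q v := dirQuantile X v (1 - β)` is the
unique offset at which the halfspace has mass `β` (`dirQuantile_eq`).

Helly's theorem gives a point of depth at least `1 / (d + 1)` (`exists_centerpoint`), so the
median satisfies `β < HD θ`, and therefore `⟪v, θ⟫ < Q v` for every unit `v`. If `HD x = β`, a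
minimizing direction `v` has `⟪v, x⟫ = Q v`, whence `Q v - ⟪v, θ⟫ ≤ ‖x - θ‖`. Conversely, the
depth at `θ + (Q v - ⟪v, θ⟫) • v` is at most `β`, so the intermediate value theorem provides a point
of depth exactly `β` on the segment joining it to `θ`.
-/

open MeasureTheory
open scoped RealInnerProductSpace ProbabilityTheory

/-! ### Continuity of the halfspace mass -/

/-- The mass that `μ` gives to the closed halfspace with inner normal `v` and with `x` on its
boundary. -/
noncomputable def halfspaceMass {d : ℕ} (μ : Measure (EuclideanSpace ℝ (Fin d)))
    (v x : EuclideanSpace ℝ (Fin d)) : ℝ :=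
  μ.real {y | 0 ≤ ⟪v, y - x⟫}

section HalfspaceMass

variable {d : ℕ} {μ : Measure (EuclideanSpace ℝ (Fin d))}

lemma isClosed_halfspace (v x : EuclideanSpace ℝ (Fin d)) :
    IsClosed {y | 0 ≤ ⟪v, y - x⟫} :=
  isClosed_le continuous_const (by fun_prop)

lemma ae_inner_sub_ne_zero (habs : μ ≪ volume)
    {v : EuclideanSpace ℝ (Fin d)} (hv : v ≠ 0) (x : EuclideanSpace ℝ (Fin d)) :
    ∀ᵐ y ∂μ, ⟪v, y - x⟫ ≠ 0 := by
  simp only [ae_iff, not_not]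
  apply habs
  have h : {y | ⟪v, y - x⟫ = 0} =
      (fun y => y + -x) ⁻¹' ((Submodule.span ℝ {v})ᗮ : Set (EuclideanSpace ℝ (Fin d))) := by
    ext y
    simp [Submodule.mem_orthogonal_singleton_iff_inner_right, sub_eq_add_neg]
  rw [h, measure_preimage_add_right]
  apply Measure.addHaar_submodule
  intro htop
  have : v ∈ (Submodule.span ℝ {v})ᗮ := htop ▸ Submodule.mem_top
  rw [Submodule.mem_orthogonal_singleton_iff_inner_right] at this
  exact hv (inner_self_eq_zero.mp this)

/-- As hyperplanes are null, the mass of a closed halfspace depends continuously on the pair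
(normal, boundary point), away from the zero normal. -/
lemma continuousAt_halfspaceMass [IsFiniteMeasure μ] (habs : μ ≪ volume)
    {p : EuclideanSpace ℝ (Fin d) × EuclideanSpace ℝ (Fin d)} (hp : p.1 ≠ 0) :
    ContinuousAt (fun p : EuclideanSpace ℝ (Fin d) × EuclideanSpace ℝ (Fin d) =>
      halfspaceMass μ p.1 p.2) p := by
  refine (ENNReal.tendsto_toReal (measure_ne_top μ _)).comp ?_
  refine tendsto_measure_of_ae_tendsto_indicator_of_isFiniteMeasure _
    (isClosed_halfspace _ _).measurableSet (fun q => (isClosed_halfspace _ _).measurableSet) ?_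
  have h0 : ∀ᵐ y ∂μ, ⟪p.1, y - p.2⟫ ≠ 0 := ae_inner_sub_ne_zero habs hp p.2
  filter_upwards [h0] with y hy
  have hc : ContinuousAt (fun q : EuclideanSpace ℝ (Fin d) × EuclideanSpace ℝ (Fin d) =>
      ⟪q.1, y - q.2⟫) p := by fun_prop
  rcases lt_or_gt_of_ne hy with h | h
  · filter_upwards [hc.eventually_lt continuousAt_const h] with q hq
    exact ⟨fun h' => absurd hq h'.not_gt, fun h' => absurd h h'.not_gt⟩
  · filter_upwards [continuousAt_const.eventually_lt hc h] with q hq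
    exact ⟨fun _ => h.le, fun _ => hq.le⟩

lemma ne_zero_of_sphere (v : Metric.sphere (0 : EuclideanSpace ℝ (Fin d)) 1) :
    (v : EuclideanSpace ℝ (Fin d)) ≠ 0 :=
  ne_zero_of_mem_unit_sphere v

lemma bddBelow_halfspaceMass (x : EuclideanSpace ℝ (Fin d)) :
    BddBelow (Set.range fun v : Metric.sphere (0 : EuclideanSpace ℝ (Fin d)) 1 =>
      halfspaceMass μ v x) :=
  ⟨0, by rintro _ ⟨v, rfl⟩; exact measureReal_nonneg⟩

lemma continuous_halfspaceMass [IsFiniteMeasure μ] (habs : μ ≪ volume) :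
    Continuous (fun p : EuclideanSpace ℝ (Fin d) ×
      Metric.sphere (0 : EuclideanSpace ℝ (Fin d)) 1 => halfspaceMass μ p.2 p.1) :=
  continuous_iff_continuousAt.mpr fun p =>
    ContinuousAt.comp (x := p)
      (f := fun p : EuclideanSpace ℝ (Fin d) × Metric.sphere (0 : EuclideanSpace ℝ (Fin d)) 1 =>
        ((p.2 : EuclideanSpace ℝ (Fin d)), p.1))
      (continuousAt_halfspaceMass habs (p := (p.2, p.1)) (ne_zero_of_sphere p.2))
      (by fun_prop)

lemma continuous_iInf_halfspaceMass [IsFiniteMeasure μ] (habs : μ ≪ volume) :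
    Continuous (fun x => ⨅ v : Metric.sphere (0 : EuclideanSpace ℝ (Fin d)) 1,
      halfspaceMass μ v x) := by
  have := IsCompact.continuous_sInf
    (f := fun (x : EuclideanSpace ℝ (Fin d))
      (v : Metric.sphere (0 : EuclideanSpace ℝ (Fin d)) 1) => halfspaceMass μ v x)
    isCompact_univ (continuous_halfspaceMass habs)
  simpa only [Set.image_univ, iInf] using this

lemma exists_halfspaceMass_eq_iInf [IsFiniteMeasure μ] (habs : μ ≪ volume)
    [Nonempty (Metric.sphere (0 : EuclideanSpace ℝ (Fin d)) 1)]
    (x : EuclideanSpace ℝ (Fin d)) :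
    ∃ v : Metric.sphere (0 : EuclideanSpace ℝ (Fin d)) 1,
      halfspaceMass μ v x = ⨅ w : Metric.sphere (0 : EuclideanSpace ℝ (Fin d)) 1,
        halfspaceMass μ w x := by
  have hc : Continuous fun v : Metric.sphere (0 : EuclideanSpace ℝ (Fin d)) 1 =>
      halfspaceMass μ v x :=
    Continuous.comp (g := fun p : EuclideanSpace ℝ (Fin d) ×
      Metric.sphere (0 : EuclideanSpace ℝ (Fin d)) 1 => halfspaceMass μ p.2 p.1)
      (f := fun v => (x, v)) (continuous_halfspaceMass habs) (Continuous.prodMk_right x)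
  obtain ⟨v, -, hv⟩ := isCompact_univ.exists_isMinOn Set.univ_nonempty hc.continuousOn
  exact ⟨v, le_antisymm (le_ciInf fun w => isMinOn_iff.mp hv w (Set.mem_univ w))
    (ciInf_le (bddBelow_halfspaceMass x) v)⟩

/-! ### Monotonicity along a fixed normal -/

/-- Full support makes the mass of halfspaces strictly decrease as they shrink in a fixed
direction. -/
lemma halfspaceMass_strictAnti [IsFiniteMeasure μ] [μ.IsOpenPosMeasure]
    {v x y : EuclideanSpace ℝ (Fin d)} (h : ⟪v, x⟫ < ⟪v, y⟫) :
    halfspaceMass μ v y < halfspaceMass μ v x := by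
  have hopen : IsOpen {z | ⟪v, x⟫ < ⟪v, z⟫ ∧ ⟪v, z⟫ < ⟪v, y⟫} :=
    (isOpen_Ioo (a := ⟪v, x⟫) (b := ⟪v, y⟫)).preimage
      (by fun_prop : Continuous fun z => ⟪v, z⟫)
  have hne : {z | ⟪v, x⟫ < ⟪v, z⟫ ∧ ⟪v, z⟫ < ⟪v, y⟫}.Nonempty := by
    refine ⟨(1 / 2 : ℝ) • (x + y), ?_⟩
    simp only [Set.mem_ofPred_eq, inner_smul_right, inner_add_right]
    constructor <;> linarith
  have hpos : 0 < μ.real {z | ⟪v, x⟫ < ⟪v, z⟫ ∧ ⟪v, z⟫ < ⟪v, y⟫} :=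
    ENNReal.toReal_pos (hopen.measure_pos μ hne).ne' (measure_ne_top _ _)
  have hdisj : Disjoint {z | 0 ≤ ⟪v, z - y⟫} {z | ⟪v, x⟫ < ⟪v, z⟫ ∧ ⟪v, z⟫ < ⟪v, y⟫} := by
    rw [Set.disjoint_left]
    intro z hz hz'
    simp only [Set.mem_ofPred_eq, inner_sub_right] at hz hz'
    linarith [hz'.2]
  have hunion := measureReal_union (μ := μ) hdisj hopen.measurableSet
  have hle : μ.real ({z | 0 ≤ ⟪v, z - y⟫} ∪ {z | ⟪v, x⟫ < ⟪v, z⟫ ∧ ⟪v, z⟫ < ⟪v, y⟫}) ≤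
      halfspaceMass μ v x := by
    refine measureReal_mono ?_
    rintro z (hz | hz) <;> simp only [Set.mem_ofPred_eq, inner_sub_right] at hz ⊢ <;> linarith
  unfold halfspaceMass at *
  linarith

lemma inner_eq_of_halfspaceMass_eq [IsFiniteMeasure μ] [μ.IsOpenPosMeasure]
    {v x y : EuclideanSpace ℝ (Fin d)} (h : halfspaceMass μ v x = halfspaceMass μ v y) :
    ⟪v, x⟫ = ⟪v, y⟫ := by
  by_contra hne
  rcases lt_or_gt_of_ne hne with h' | h'
  · exact (halfspaceMass_strictAnti (μ := μ) h').ne h.symm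
  · exact (halfspaceMass_strictAnti (μ := μ) h').ne h

lemma tendsto_halfspaceMass_atTop [IsFiniteMeasure μ] (v : EuclideanSpace ℝ (Fin d))
    (hv : ‖v‖ = 1) :
    Filter.Tendsto (fun n : ℕ => halfspaceMass μ v ((n : ℝ) • v)) Filter.atTop (nhds 0) := by
  have hempty : ⋂ n : ℕ, {y | 0 ≤ ⟪v, y - (n : ℝ) • v⟫} = ∅ := by
    ext y
    simp only [Set.mem_iInter, Set.mem_ofPred_eq, Set.mem_empty_iff_false, iff_false, not_forall,
      not_le, inner_sub_right, inner_smul_right, real_inner_self_eq_norm_sq, hv]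
    obtain ⟨n, hn⟩ := exists_nat_gt ⟪v, y⟫
    exact ⟨n, by linarith⟩
  have h := tendsto_measure_iInter_atTop (μ := μ)
    (s := fun n : ℕ => {y | 0 ≤ ⟪v, y - (n : ℝ) • v⟫})
    (fun n => (isClosed_halfspace _ _).measurableSet.nullMeasurableSet)
    (fun m n hmn y hy => by
      have : (m : ℝ) ≤ n := by exact_mod_cast hmn
      simp only [Set.mem_ofPred_eq, inner_sub_right, inner_smul_right,
        real_inner_self_eq_norm_sq, hv] at hy ⊢
      linarith)
    ⟨0, measure_ne_top _ _⟩
  rw [hempty, measure_empty] at h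
  exact (ENNReal.tendsto_toReal ENNReal.zero_ne_top).comp h

/-- Below the mass of a given halfspace, every positive level is attained on the same normal
line, by the intermediate value theorem. -/
lemma exists_halfspaceMass_eq [IsFiniteMeasure μ] (habs : μ ≪ volume)
    {v x : EuclideanSpace ℝ (Fin d)} (hv : ‖v‖ = 1) {β : ℝ} (hβ : 0 < β)
    (hx : β < halfspaceMass μ v x) :
    ∃ t : ℝ, halfspaceMass μ v (t • v) = β := by
  have hv0 : v ≠ 0 := by rintro rfl; simp at hv
  have hc : Continuous fun t : ℝ => halfspaceMass μ v (t • v) :=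
    continuous_iff_continuousAt.mpr fun t => ContinuousAt.comp (x := t)
      (f := fun t : ℝ => (v, t • v))
      (continuousAt_halfspaceMass habs (p := (v, t • v)) hv0) (by fun_prop)
  obtain ⟨n, hn⟩ := ((tendsto_halfspaceMass_atTop (μ := μ) v hv).eventually_lt_const hβ).exists
  have hxt : halfspaceMass μ v (⟪v, x⟫ • v) = halfspaceMass μ v x := by
    simp [halfspaceMass, inner_sub_right, inner_smul_right, hv]
  obtain ⟨t, -, ht⟩ := intermediate_value_uIcc (a := (n : ℝ)) (b := ⟪v, x⟫) hc.continuousOn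
    (Set.mem_uIcc_of_le hn.le (by rw [hxt]; exact hx.le))
  exact ⟨t, ht⟩

/-! ### The centerpoint theorem -/

/-- Inner approximation of an open halfspace by compact convex sets. -/
lemma exists_compact_convex_of_lt_halfspace [IsFiniteMeasure μ] {v x : EuclideanSpace ℝ (Fin d)}
    {c : ℝ} (h : c < μ.real {y | ⟪v, y - x⟫ < 0}) :
    ∃ K : Set (EuclideanSpace ℝ (Fin d)), IsCompact K ∧ Convex ℝ K ∧ c < μ.real K ∧ x ∉ K := by
  let K : ℕ → Set (EuclideanSpace ℝ (Fin d)) := fun n =>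
    Metric.closedBall 0 n ∩ {y | ⟪v, y⟫ ≤ ⟪v, x⟫ - 1 / ((n : ℝ) + 1)}
  have hmono : Monotone K := by
    intro m n hmn y hy
    have h1 : (m : ℝ) ≤ n := by exact_mod_cast hmn
    refine ⟨Metric.closedBall_subset_closedBall h1 hy.1, ?_⟩
    have h2 : 1 / ((n : ℝ) + 1) ≤ 1 / ((m : ℝ) + 1) := Nat.one_div_le_one_div hmn
    have h3 := hy.2
    simp only [Set.mem_ofPred_eq] at h3 ⊢
    linarith
  have hU : ⋃ n, K n = {y | ⟪v, y - x⟫ < 0} := by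
    ext y
    simp only [Set.mem_iUnion, Set.mem_ofPred_eq, inner_sub_right]
    constructor
    · rintro ⟨n, -, hn⟩
      have : 0 < 1 / ((n : ℝ) + 1) := Nat.one_div_pos_of_nat
      simp only [Set.mem_ofPred_eq] at hn
      linarith
    · intro hy
      obtain ⟨m, hm⟩ := exists_nat_one_div_lt (sub_pos.mpr (sub_neg.mp hy))
      obtain ⟨k, hk⟩ := exists_nat_ge ‖y‖
      refine ⟨max m k, ?_, ?_⟩
      · rw [mem_closedBall_zero_iff]
        exact hk.trans (by exact_mod_cast le_max_right m k)
      · have h2 : 1 / (((max m k : ℕ) : ℝ) + 1) ≤ 1 / ((m : ℝ) + 1) :=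
          Nat.one_div_le_one_div (le_max_left m k)
        simp only [Set.mem_ofPred_eq]
        linarith
  have ht := tendsto_measure_iUnion_atTop (μ := μ) hmono
  rw [hU] at ht
  obtain ⟨n, hn⟩ := (((ENNReal.tendsto_toReal (measure_ne_top μ _)).comp ht).eventually_const_lt
    h).exists
  refine ⟨K n, ?_, ?_, hn, ?_⟩
  · exact (isCompact_closedBall _ _).inter_right (isClosed_le (by fun_prop) continuous_const)
  · exact (convex_closedBall _ _).inter
      (convex_halfSpace_le (innerₛₗ ℝ v).isLinear _)
  · rintro ⟨-, hx⟩
    have : 0 < 1 / ((n : ℝ) + 1) := Nat.one_div_pos_of_nat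
    simp only [Set.mem_ofPred_eq] at hx
    linarith

/-- The centerpoint theorem: some point has depth at least `1 / (d + 1)`. Any `d + 1` sets of mass
greater than `d / (d + 1)` meet, so by Helly's theorem all the compact convex ones have a common
point; no open halfspace of mass greater than `d / (d + 1)` misses that point. -/
lemma exists_centerpoint_s12 [IsProbabilityMeasure μ] :
    ∃ x, ∀ v, 1 / ((d : ℝ) + 1) ≤ halfspaceMass μ v x := by
  have hd : (0 : ℝ) < (d : ℝ) + 1 := by positivity
  obtain ⟨x, hx⟩ := Convex.helly_theorem_set_compact' (𝕜 := ℝ)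
    (F := {K : Set (EuclideanSpace ℝ (Fin d)) | IsCompact K ∧ Convex ℝ K ∧
      1 - 1 / ((d : ℝ) + 1) < μ.real K})
    (fun K hK => hK.2.1) (fun K hK => hK.1) (by
      intro G hG hcard
      rw [finrank_euclideanSpace_fin] at hcard
      by_contra hempty
      rw [Set.not_nonempty_iff_eq_empty] at hempty
      have hcover : ⋃ K ∈ G, Kᶜ = (Set.univ : Set (EuclideanSpace ℝ (Fin d))) := by
        rw [← Set.compl_empty, ← hempty, Set.compl_sInter, Set.sUnion_image]
        simp
      have h1 := measureReal_biUnion_finset_le (μ := μ) G (fun K => Kᶜ)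
      rw [hcover, probReal_univ] at h1
      have hlt : ∀ K ∈ G, μ.real Kᶜ < 1 / ((d : ℝ) + 1) := by
        intro K hK
        have hK' := hG hK
        rw [probReal_compl_eq_one_sub hK'.1.measurableSet]
        linarith [hK'.2.2]
      have hne : G.Nonempty := by
        rw [Finset.nonempty_iff_ne_empty]
        rintro rfl
        simp at h1
        linarith
      have h2 := Finset.sum_lt_sum_of_nonempty hne hlt
      rw [Finset.sum_const, nsmul_eq_mul] at h2
      have h3 : (G.card : ℝ) * (1 / ((d : ℝ) + 1)) ≤ ((d : ℝ) + 1) * (1 / ((d : ℝ) + 1)) := by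
        gcongr
        exact_mod_cast hcard
      rw [mul_one_div_cancel hd.ne'] at h3
      linarith)
  refine ⟨x, fun v => ?_⟩
  by_contra! hlt
  have hcompl : {y | ⟪v, y - x⟫ < 0} = {y | 0 ≤ ⟪v, y - x⟫}ᶜ := by ext; simp
  have hlarge : 1 - 1 / ((d : ℝ) + 1) < μ.real {y | ⟪v, y - x⟫ < 0} := by
    rw [hcompl, probReal_compl_eq_one_sub (isClosed_halfspace v x).measurableSet]
    unfold halfspaceMass at hlt
    linarith
  obtain ⟨K, hKc, hKconv, hK, hxK⟩ := exists_compact_convex_of_lt_halfspace hlarge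
  exact hxK (hx K ⟨hKc, hKconv, hK⟩)

end HalfspaceMass

/-! ### Depth and quantiles in terms of the law -/

section Law

variable {d : ℕ} {Ω : Type*} [MeasureSpace Ω] {X : Ω → EuclideanSpace ℝ (Fin d)}

lemma halfspaceDepth_eq (hX : Measurable X) (x : EuclideanSpace ℝ (Fin d)) :
    halfspaceDepth X x = ⨅ v : Metric.sphere (0 : EuclideanSpace ℝ (Fin d)) 1,
      halfspaceMass (Measure.map X ℙ) v x := by
  unfold halfspaceDepth halfspaceMass
  congr 1 with v
  rw [map_measureReal_apply hX (isClosed_halfspace _ _).measurableSet]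
  rfl

/-- The upper `β`-quantile of a projection is the offset at which the halfspace has mass `β`. -/
lemma dirQuantile_eq [IsFiniteMeasure (ℙ : Measure Ω)] (hX : Measurable X)
    (habs : Measure.map X ℙ ≪ volume) [(Measure.map X ℙ).IsOpenPosMeasure]
    {v : EuclideanSpace ℝ (Fin d)} (hv : ‖v‖ = 1) {β t : ℝ}
    (ht : halfspaceMass (Measure.map X ℙ) v (t • v) = β) :
    dirQuantile X v (1 - β) = t := by
  have hv0 : v ≠ 0 := by rintro rfl; simp at hv
  have hinner (s : ℝ) : ⟪v, s • v⟫ = s := by simp [inner_smul_right, hv]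
  -- The strict inequality in the quantile is immaterial: hyperplanes are null.
  have hmass (s : ℝ) : (ℙ {ω | s < ⟪v, X ω⟫}).toReal =
      halfspaceMass (Measure.map X ℙ) v (s • v) := by
    have hopen : IsOpen {y : EuclideanSpace ℝ (Fin d) | s < ⟪v, y⟫} :=
      isOpen_lt continuous_const (by fun_prop)
    change (ℙ (X ⁻¹' {y | s < ⟪v, y⟫})).toReal = _
    rw [← Measure.map_apply hX hopen.measurableSet]
    unfold halfspaceMass
    refine congrArg ENNReal.toReal (measure_congr ?_)
    have h0 : ∀ᵐ y ∂(Measure.map X ℙ), ⟪v, y - s • v⟫ ≠ 0 :=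
      ae_inner_sub_ne_zero habs hv0 _
    filter_upwards [h0] with y hy
    rw [inner_sub_right, hinner] at hy
    apply propext
    change s < ⟪v, y⟫ ↔ 0 ≤ ⟪v, y - s • v⟫
    rw [inner_sub_right, hinner]
    exact ⟨fun h => by linarith, fun h => lt_of_le_of_ne (by linarith) fun e => hy (by linarith)⟩
  have hset : {s : ℝ | (ℙ {ω | s < ⟪v, X ω⟫}).toReal < 1 - (1 - β)} = Set.Ioi t := by
    ext s
    rw [Set.mem_ofPred_eq, hmass, sub_sub_cancel, ← ht, Set.mem_Ioi]
    constructor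
    · intro h
      by_contra! hst
      rcases hst.eq_or_lt with rfl | hst
      · exact lt_irrefl _ h
      · exact lt_asymm h (halfspaceMass_strictAnti (by rwa [hinner, hinner]))
    · intro h
      exact halfspaceMass_strictAnti (by rwa [hinner, hinner])
  unfold dirQuantile
  rw [hset, csInf_Ioi]

end Law

/-! ### Distance to the depth contour -/

/-- The distance from a halfspace median `θ` to the depth contour at level
`β ∈ (0, 1/(d+1))` equals the minimal centered directional quantile at level `1−β`:
`inf {‖x − θ‖ : HD(x|X) = β} = inf over unit v of |Q_{v^⊤X}(1−β) − ⟨v,θ⟩|`. -/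
theorem depth_contour_distance_eq_min_directional_quantile
    {d : ℕ} (hd : 2 ≤ d)
    {Ω : Type*} [MeasureSpace Ω] [IsProbabilityMeasure (ℙ : Measure Ω)]
    (X : Ω → EuclideanSpace ℝ (Fin d)) (hX : Measurable X)
    (habs : Measure.map X ℙ ≪ (volume : Measure (EuclideanSpace ℝ (Fin d))))
    (hsupp : (Measure.map X ℙ).IsOpenPosMeasure)
    (θ : EuclideanSpace ℝ (Fin d))
    (hθ : halfspaceDepth X θ = ⨆ x : EuclideanSpace ℝ (Fin d), halfspaceDepth X x)
    (β : ℝ) (hβ : β ∈ Set.Ioo (0 : ℝ) (1 / (d + 1))) :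
    sInf ((fun x => ‖x - θ‖) '' {x : EuclideanSpace ℝ (Fin d) | halfspaceDepth X x = β})
      = ⨅ v : Metric.sphere (0 : EuclideanSpace ℝ (Fin d)) 1,
        |dirQuantile X (v : EuclideanSpace ℝ (Fin d)) (1 - β)
          - ⟪(v : EuclideanSpace ℝ (Fin d)), θ⟫| := by
  set μ := Measure.map X ℙ with hμ
  have : IsProbabilityMeasure μ := Measure.isProbabilityMeasure_map hX.aemeasurable
  have : Nonempty (Fin d) := ⟨⟨0, by omega⟩⟩
  have : Nonempty (Metric.sphere (0 : EuclideanSpace ℝ (Fin d)) 1) :=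
    (NormedSpace.sphere_nonempty.mpr zero_le_one).to_subtype
  obtain ⟨hβ0, hβ1⟩ := hβ
  have hle_mass (x) (v : Metric.sphere (0 : EuclideanSpace ℝ (Fin d)) 1) :
      halfspaceDepth X x ≤ halfspaceMass μ v x := by
    rw [halfspaceDepth_eq hX]
    exact ciInf_le (bddBelow_halfspaceMass x) v
  have hβθ : β < halfspaceDepth X θ := by
    obtain ⟨c, hc⟩ := exists_centerpoint_s12 (μ := μ)
    have hbdd : BddAbove (Set.range fun x => halfspaceDepth X x) := by
      refine ⟨1, ?_⟩
      rintro _ ⟨x, rfl⟩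
      exact (hle_mass x (Classical.arbitrary _)).trans measureReal_le_one
    calc β < 1 / ((d : ℝ) + 1) := hβ1
      _ ≤ halfspaceDepth X c := by
        rw [halfspaceDepth_eq hX]
        exact le_ciInf fun v => hc v
      _ ≤ halfspaceDepth X θ := hθ ▸ le_ciSup hbdd c
  have hcont : Continuous (halfspaceDepth X) := by
    rw [show halfspaceDepth X = _ from funext (halfspaceDepth_eq hX)]
    exact continuous_iInf_halfspaceMass habs
  have hnorm (v : Metric.sphere (0 : EuclideanSpace ℝ (Fin d)) 1) :
      ‖(v : EuclideanSpace ℝ (Fin d))‖ = 1 := norm_eq_of_mem_sphere v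
  have hquant (v : Metric.sphere (0 : EuclideanSpace ℝ (Fin d)) 1) :
      halfspaceMass μ v (dirQuantile X v (1 - β) • (v : EuclideanSpace ℝ (Fin d))) = β := by
    obtain ⟨t, ht⟩ := exists_halfspaceMass_eq habs (hnorm v) hβ0 (hβθ.trans_le (hle_mass θ v))
    rwa [dirQuantile_eq hX habs (hnorm v) ht]
  have hinner (v : Metric.sphere (0 : EuclideanSpace ℝ (Fin d)) 1) (s : ℝ) :
      ⟪(v : EuclideanSpace ℝ (Fin d)), s • (v : EuclideanSpace ℝ (Fin d))⟫ = s := by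
    simp [inner_smul_right]
  have hpos (v : Metric.sphere (0 : EuclideanSpace ℝ (Fin d)) 1) :
      0 ≤ dirQuantile X v (1 - β) - ⟪(v : EuclideanSpace ℝ (Fin d)), θ⟫ := by
    by_contra! hneg
    have := halfspaceMass_strictAnti (μ := μ) (v := v)
      (x := dirQuantile X v (1 - β) • (v : EuclideanSpace ℝ (Fin d))) (y := θ)
      (by rw [hinner]; linarith)
    rw [hquant] at this
    linarith [hle_mass θ v]
  -- The segment from `θ` to the nearest point of the hyperplane at offset `Q v` has length
  -- `Q v - ⟪v, θ⟫`, and the depth drops to at most `β` along it.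
  have hexists (v : Metric.sphere (0 : EuclideanSpace ℝ (Fin d)) 1) :
      ∃ x, halfspaceDepth X x = β ∧
        ‖x - θ‖ ≤ dirQuantile X v (1 - β) - ⟪(v : EuclideanSpace ℝ (Fin d)), θ⟫ := by
    set r := dirQuantile X v (1 - β) - ⟪(v : EuclideanSpace ℝ (Fin d)), θ⟫ with hr
    have hend : halfspaceDepth X (θ + r • (v : EuclideanSpace ℝ (Fin d))) ≤ β := by
      refine (hle_mass _ v).trans (le_of_eq ?_)
      rw [← hquant v]
      unfold halfspaceMass
      simp only [inner_sub_right, inner_add_right, hinner, hr, add_sub_cancel]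
    have hc : Continuous fun s : ℝ => halfspaceDepth X (θ + s • (v : EuclideanSpace ℝ (Fin d))) :=
      hcont.comp (by fun_prop)
    obtain ⟨s, hs, hsβ⟩ := intermediate_value_Icc' (hpos v) hc.continuousOn
      ⟨hend, by simpa using hβθ.le⟩
    refine ⟨_, hsβ, ?_⟩
    rw [add_sub_cancel_left, norm_smul, hnorm v, mul_one, Real.norm_of_nonneg hs.1]
    exact hs.2
  apply le_antisymm
  · refine le_ciInf fun v => ?_
    obtain ⟨x, hx, hxle⟩ := hexists v
    rw [abs_of_nonneg (hpos v)]
    refine (csInf_le ⟨0, ?_⟩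
      (Set.mem_image_of_mem (fun x => ‖x - θ‖) (Set.mem_ofPred_eq.mpr hx))).trans hxle
    rintro _ ⟨y, -, rfl⟩
    exact norm_nonneg _
  · obtain ⟨x₀, hx₀, -⟩ := hexists (Classical.arbitrary _)
    refine le_csInf ⟨_, Set.mem_image_of_mem _ hx₀⟩ ?_
    rintro _ ⟨x, hx, rfl⟩
    obtain ⟨v, hv⟩ := exists_halfspaceMass_eq_iInf (μ := μ) habs x
    rw [← halfspaceDepth_eq hX, Set.mem_ofPred_eq.mp hx, ← hquant v] at hv
    have hvx := inner_eq_of_halfspaceMass_eq hv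
    rw [hinner] at hvx
    refine (ciInf_le ⟨0, ?_⟩ v).trans ?_
    · rintro _ ⟨w, rfl⟩
      exact abs_nonneg _
    · rw [← hvx, ← inner_sub_right]
      simpa [hnorm v] using abs_real_inner_le_norm (v : EuclideanSpace ℝ (Fin d)) (x - θ)
end
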